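/- Let α ∈ Δ' be irrational (α ∉ ℚ³) and exceptional, meaning that there exists α' ∈ Δ' with α' ≠ α and I(α') = I(α). Then the restriction of the shift σ to C_α has exactly two ergodic σ-invariant Borel probability measures μ₁ and μ₂; their rotation vectors ∫ κ dμ₁ and ∫ κ dμ₂ are distinct; and DF_MZ(C_α) equals the line segment with endpoints ∫ κ dμ₁ and ∫ κ dμ₂, which in turn equals the exceptional interval P_α = {α' ∈ Δ' : I(α') = I(α)}. In particular, C_α contains points whose Birkhoff digit frequency differs from ∫ κ dμ₁ (and from ∫ κ dμ₂), so μ₁ and μ₂ are lost measures. -/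

import Mathlib

open Filter Topology MeasureTheory

/-- The sequence space `Σ⁺ = {0,1,2}^ℕ` (with the product topology). -/
abbrev Seq3 := ℕ → Fin 3

/-- The shift map `σ`. -/
def shift (s : Seq3) : Seq3 := fun n => s (n + 1)

/-- The observable `κ(s) = e_{s₀}`. -/
noncomputable def kappa (s : Seq3) : Fin 3 → ℝ := fun i => if i = s 0 then 1 else 0

/-- The cocycle `κ_σ(s,r) = Σ_{i<r} κ(σⁱ s)`. -/
noncomputable def birk (s : Seq3) (r : ℕ) : Fin 3 → ℝ :=
  ∑ i ∈ Finset.range r, kappa (shift^[i] s)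

/-- The Birkhoff digit frequency of `s` exists and equals `v`. -/
def hasFreq (s : Seq3) (v : Fin 3 → ℝ) : Prop :=
  Tendsto (fun r : ℕ => (r : ℝ)⁻¹ • birk s r) atTop (nhds v)

/-- The lexicographic order on `Σ⁺`. -/
def lexLe (s t : Seq3) : Prop :=
  s = t ∨ ∃ n, (∀ i, i < n → s i = t i) ∧ s n < t n

/-- The set `Max` of maximal sequences. -/
def MaxSet : Set Seq3 := {w | w 0 = 2 ∧ ∀ r : ℕ, lexLe (shift^[r] w) w}

/-- The symbolic β-shift `B(w)`. -/
def BetaShift (w : Seq3) : Set Seq3 := {s | ∀ r : ℕ, lexLe (shift^[r] s) w}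

/-- The digit frequency set `DF(w)`. -/
def DF (w : Seq3) : Set (Fin 3 → ℝ) := {v | ∃ s ∈ BetaShift w, hasFreq s v}

/-- The Misiurewicz–Ziemian digit frequency set `DF_MZ(X)` of a subset `X ⊆ Σ⁺`. -/
def DFMZ (X : Set Seq3) : Set (Fin 3 → ℝ) :=
  {v | ∃ (s : ℕ → Seq3) (r : ℕ → ℕ), (∀ i, s i ∈ X) ∧ Tendsto r atTop atTop ∧
    Tendsto (fun i => (r i : ℝ)⁻¹ • birk (s i) (r i)) atTop (nhds v)}

/-- The standard 2-simplex `Δ ⊆ ℝ³`. -/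
def Delta : Set (Fin 3 → ℝ) := {α | (∀ i, 0 ≤ α i) ∧ α 0 + α 1 + α 2 = 1}

/-- `Δ' = {α ∈ Δ : α₂ > 0}`. -/
def Delta' : Set (Fin 3 → ℝ) := {α | α ∈ Delta ∧ 0 < α 2}

/-- `I` is the infimax sequence of `α`: the infimum, in the lexicographic order, of the
(nonempty) set of maximal sequences with digit frequency `α`; it belongs to `Max`. -/
def IsInfimax (α : Fin 3 → ℝ) (I : Seq3) : Prop :=
  {w | w ∈ MaxSet ∧ hasFreq w α}.Nonempty ∧ I ∈ MaxSet ∧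
    (∀ w, w ∈ MaxSet ∧ hasFreq w α → lexLe I w) ∧
    (∀ b : Seq3, (∀ w, w ∈ MaxSet ∧ hasFreq w α → lexLe b w) → lexLe b I)

/-- The closure of the forward `σ`-orbit of `s` (e.g. `C_α` is `orbitClosure I(α)`). -/
def orbitClosure (s : Seq3) : Set Seq3 := closure {t | ∃ r : ℕ, shift^[r] s = t}

/-- A vector in `ℝ³` is rational if all its coordinates are. -/
def IsRat (v : Fin 3 → ℝ) : Prop := ∀ i, ∃ q : ℚ, v i = (q : ℝ)

/-- A minimal set of a continuous map: a nonempty compact invariant set in which every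
point has dense forward orbit. -/
def IsMinimalSet {X : Type*} [TopologicalSpace X] (f : X → X) (C : Set X) : Prop :=
  C.Nonempty ∧ IsCompact C ∧ Set.MapsTo f C C ∧
    ∀ x ∈ C, C ⊆ closure {y | ∃ n : ℕ, f^[n] x = y}

namespace IMX

abbrev V3 := Fin 3 → ℝ

def blk (n : ℕ) : Fin 3 → List (Fin 3)
  | 0 => [1]
  | 1 => 2 :: List.replicate (n+1) 0
  | 2 => 2 :: List.replicate n 0

def sub (n : ℕ) (l : List (Fin 3)) : List (Fin 3) := l.flatMap (blk n)

def Bk : List ℕ → Fin 3 → List (Fin 3)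
  | [], i => [i]
  | n :: ns, i => sub n (Bk ns i)

def Fl (ns : List ℕ) (l : List (Fin 3)) : List (Fin 3) := l.flatMap (Bk ns)

lemma sub_nil (n : ℕ) : sub n [] = [] := rfl
lemma sub_cons (n : ℕ) (a : Fin 3) (l) : sub n (a :: l) = blk n a ++ sub n l := rfl
lemma sub_append (n : ℕ) (l m) : sub n (l ++ m) = sub n l ++ sub n m := by
  simp [sub]
lemma Fl_nil' (ns) : Fl ns [] = [] := rfl
lemma Fl_cons' (ns) (a : Fin 3) (l) : Fl ns (a :: l) = Bk ns a ++ Fl ns l := rfl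
lemma Fl_append' (ns) (l m) : Fl ns (l ++ m) = Fl ns l ++ Fl ns m := by
  simp [Fl]
lemma Fl_single (ns) (a : Fin 3) : Fl ns [a] = Bk ns a := by simp [Fl]

lemma Fl_nil (l : List (Fin 3)) : Fl [] l = l := by
  induction l with
  | nil => rfl
  | cons a l ih => rw [Fl_cons', ih]; rfl

lemma Fl_cons (n : ℕ) (ns) (l : List (Fin 3)) : Fl (n :: ns) l = sub n (Fl ns l) := by
  induction l with
  | nil => rfl
  | cons a l ih => rw [Fl_cons', ih, Fl_cons', sub_append]; rfl

lemma Fl_append (ns ms : List ℕ) (l : List (Fin 3)) : Fl (ns ++ ms) l = Fl ns (Fl ms l) := by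
  induction ns generalizing l with
  | nil => simp [Fl_nil]
  | cons n ns ih => simp [Fl_cons, ih]

noncomputable def ee (i : Fin 3) : V3 := fun j => if j = i then 1 else 0

noncomputable def cnt : List (Fin 3) → V3
  | [] => 0
  | a :: l => ee a + cnt l

lemma cnt_append (l m) : cnt (l ++ m) = cnt l + cnt m := by
  induction l with
  | nil => simp [cnt]
  | cons a l ih => simp [cnt, ih, add_assoc]

lemma cnt_replicate (k : ℕ) (a) : cnt (List.replicate k a) = (k : ℝ) • ee a := by
  induction k with
  | zero => simp [cnt]
  | succ k ih => simp [List.replicate_succ, cnt, ih, add_smul, add_comm]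

lemma cnt_nonneg (l) (i) : 0 ≤ cnt l i := by
  induction l with
  | nil => simp [cnt]
  | cons a l ih =>
    simp only [cnt, Pi.add_apply, ee]
    split_ifs <;> linarith

lemma cnt_sum (l) : cnt l 0 + cnt l 1 + cnt l 2 = l.length := by
  induction l with
  | nil => simp [cnt]
  | cons a l ih =>
    simp only [cnt, Pi.add_apply, ee, List.length_cons]
    push_cast
    fin_cases a <;> simp <;> linarith

noncomputable def Tn (n : ℕ) : V3 →ₗ[ℝ] V3 where
  toFun a := ![a 1, a 0 - n * a 2, (n+1) * a 2 - a 0]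
  map_add' a b := by ext i; fin_cases i <;> simp <;> ring
  map_smul' c a := by ext i; fin_cases i <;> simp <;> ring

@[simp] lemma Tn_0 (n a) : Tn n a 0 = a 1 := rfl
@[simp] lemma Tn_1 (n a) : Tn n a 1 = a 0 - n * a 2 := rfl
@[simp] lemma Tn_2 (n a) : Tn n a 2 = (n+1) * a 2 - a 0 := rfl

noncomputable def TT : List ℕ → (V3 →ₗ[ℝ] V3)
  | [] => LinearMap.id
  | n :: ns => (TT ns).comp (Tn n)

lemma TT_nil (v) : TT [] v = v := rfl
lemma TT_cons (n ns v) : TT (n :: ns) v = TT ns (Tn n v) := rfl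
lemma TT_append (ns ms v) : TT (ns ++ ms) v = TT ms (TT ns v) := by
  induction ns generalizing v with
  | nil => rfl
  | cons n ns ih => simp [TT_cons, ih]

lemma Tn_cnt_blk (n : ℕ) (a) : Tn n (cnt (blk n a)) = ee a := by
  have h : ∀ v : V3, Tn n v = ![v 1, v 0 - n * v 2, (n+1) * v 2 - v 0] := fun v => rfl
  rw [h]
  fin_cases a <;> ext i <;> fin_cases i <;>
    simp [blk, cnt, cnt_replicate, ee, List.replicate_succ] <;> ring

lemma Tn_cnt_sub (n : ℕ) (l) : Tn n (cnt (sub n l)) = cnt l := by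
  induction l with
  | nil => simp [sub_nil, cnt]
  | cons a l ih => rw [sub_cons, cnt_append, map_add, ih, Tn_cnt_blk]; rfl

lemma TT_cnt_Fl (ns) (l) : TT ns (cnt (Fl ns l)) = cnt l := by
  induction ns with
  | nil => simp [Fl_nil, TT_nil]
  | cons n ns ih => rw [Fl_cons, TT_cons, Tn_cnt_sub, ih]

lemma Tn_inj (n : ℕ) (v) (h : Tn n v = 0) : v = 0 := by
  have h0 := congrFun h 0
  have h1 := congrFun h 1
  have h2 := congrFun h 2
  simp at h0 h1 h2
  have : v 2 = 0 := by linarith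
  ext i; fin_cases i <;> simp
  · rw [this] at h1; linarith
  · exact h0
  · exact this

lemma TT_inj (ns) (v) (h : TT ns v = 0) : v = 0 := by
  induction ns generalizing v with
  | nil => exact h
  | cons n ns ih => exact Tn_inj n v (ih _ h)

lemma V3_ext {u v : V3} (h0 : u 0 = v 0) (h1 : u 1 = v 1) (h2 : u 2 = v 2) : u = v := by
  ext i; fin_cases i <;> assumption

lemma recon (ns) (v : V3) : v = ∑ i, (TT ns v) i • cnt (Bk ns i) := by
  have : TT ns (v - ∑ i, (TT ns v) i • cnt (Bk ns i)) = 0 := by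
    rw [map_sub, map_sum]
    simp only [map_smul, ← Fl_single, TT_cnt_Fl]
    rw [Fin.sum_univ_three]
    apply V3_ext <;> simp [cnt, ee]
  exact sub_eq_zero.1 (TT_inj _ _ this)

lemma recon_sum (ns) (v : V3) : v 0 + v 1 + v 2 =
    (TT ns v) 0 * (Bk ns 0).length + (TT ns v) 1 * (Bk ns 1).length
      + (TT ns v) 2 * (Bk ns 2).length := by
  have h := recon ns v
  have h0 := congrFun h 0
  have h1 := congrFun h 1
  have h2 := congrFun h 2
  simp only [Fin.sum_univ_three, Pi.add_apply, Pi.smul_apply, smul_eq_mul] at h0 h1 h2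
  rw [← cnt_sum, ← cnt_sum, ← cnt_sum]
  linarith

/-- lexicographic comparison of finite words -/
def ge : List (Fin 3) → List (Fin 3) → Prop
  | _, [] => True
  | [], _ :: _ => False
  | a :: t, b :: W => b < a ∨ (a = b ∧ ge t W)

def avoid (W u : List (Fin 3)) : Prop := ∀ t, t <:+ u → ¬ ge t W

lemma ge_nil (t) : ge t [] := by cases t <;> simp [ge]
lemma ge_cons (a t b W) : ge (a :: t) (b :: W) ↔ b < a ∨ (a = b ∧ ge t W) := by simp [ge]

lemma ge_pre (p t W) : ge (p ++ t) (p ++ W) ↔ ge t W := by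
  induction p with
  | nil => rfl
  | cons a p ih => simp [ge_cons, ih]

lemma ge_head_nonzero {x : Fin 3} (hx : x ≠ 0) (z n : ℕ) (h : z < n) (u1 W) :
    ge (List.replicate z 0 ++ x :: u1) (List.replicate n 0 ++ W) := by
  obtain ⟨k, rfl⟩ := Nat.exists_eq_add_of_lt h
  rw [show z + k + 1 = z + (k+1) by ring, ← List.replicate_append_replicate, List.append_assoc, ge_pre,
    List.replicate_succ, List.cons_append, ge_cons]
  left
  exact Fin.pos_of_ne_zero hx

lemma avoid_cons {W a u} (h : avoid W u) (h2 : ¬ ge (a :: u) W) : avoid W (a :: u) := by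
  intro t ht
  rcases List.suffix_cons_iff.1 ht with rfl | ht
  · exact h2
  · exact h t ht

lemma step_exists (n : ℕ) (W2 u : List (Fin 3)) (h : avoid (sub n (2 :: W2)) u) :
    ∃ (v : List (Fin 3)) (c z : ℕ), avoid (2 :: W2) v ∧
      Tn n (cnt u) = cnt v + ((c + z : ℝ) - (n + 2)) • ![0, 1, -1] ∧
      (n + 2 ≤ z ∨ ∃ x u1, u = List.replicate z 0 ++ x :: u1 ∧ x ≠ 0 ∧
        (c = 0 → ∀ W, ge v W → ge (x :: u1) (sub n W))) := by
  induction u with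
  | nil =>
    refine ⟨[], 0, n + 2, ?_, ?_, Or.inl le_rfl⟩
    · intro t ht
      rw [List.suffix_nil.1 ht]
      simp [ge]
    · simp [cnt]
  | cons a u ih =>
    obtain ⟨v, c, z, hv, hT, hR⟩ := ih (fun t ht => h t (ht.trans (List.suffix_cons a u)))
    have hself := h (a :: u) List.suffix_rfl
    have hTe : ∀ i, Tn n (cnt (a :: u)) i = Tn n (ee a) i + Tn n (cnt u) i := by
      intro i; simp [cnt]
    have hTv : ∀ i, Tn n (cnt u) i = cnt v i + ((c + z : ℝ) - (n + 2)) * (![0, 1, -1] : V3) i := by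
      intro i; rw [hT]; rfl
    have a3 : a = 0 ∨ a = 1 ∨ a = 2 := by fin_cases a <;> simp
    rcases a3 with rfl | rfl | rfl
    · refine ⟨v, c, z + 1, hv, ?_, ?_⟩
      · apply V3_ext <;> rw [hTe, hTv] <;> simp [ee] <;> ring
      · rcases hR with hR | ⟨x, u1, rfl, hx, hR⟩
        · left; omega
        · right
          exact ⟨x, u1, by simp [List.replicate_succ], hx, hR⟩
    · refine ⟨0 :: v, c + z, 0, ?_, ?_, Or.inr ⟨1, u, by simp, by simp, ?_⟩⟩
      · apply avoid_cons hv
        simp [ge]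
      · apply V3_ext <;> rw [hTe, hTv] <;> simp [ee, cnt]
      · intro hcz W hW
        have hc : c = 0 := by omega
        have hz : z = 0 := by omega
        subst hz
        rcases hR with hR | ⟨x, u1, rfl, hx, hR⟩
        · omega
        · cases W with
          | nil => exact ge_nil _
          | cons b W =>
            rw [ge_cons] at hW
            rcases hW with hW | ⟨rfl, hW⟩
            · exact absurd hW (by simp)
            · have := hR hc W hW
              simp [sub_cons, blk, ge_cons, this]
    · -- digit 2
      have hsm : ∀ (x : Fin 3) u1 t, ge (2 :: t) (sub n (0 :: u1)) := by
        intro x u1 t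
        simp [sub_cons, blk, ge_cons]
      have hone : ∀ (x : Fin 3) u1 W, x ≠ 0 → ge (2 :: (List.replicate n 0 ++ x :: u1)) (sub n (1 :: W)) := by
        intro x u1 W hx
        simp only [sub_cons, blk, List.cons_append, ge_cons]
        right
        exact ⟨trivial, ge_head_nonzero hx _ _ (Nat.lt_succ_self n) _ _⟩
      rcases lt_trichotomy z n with hz | hz | hz
      · exfalso
        rcases hR with hR | ⟨x, u1, rfl, hx, hR⟩
        · omega
        · apply hself
          simp only [sub_cons, blk, List.cons_append, ge_cons]
          right
          exact ⟨trivial, ge_head_nonzero hx _ _ hz _ _⟩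
      · subst hz
        rcases hR with hR | ⟨x, u1, rfl, hx, hR⟩
        · omega
        rcases Nat.eq_zero_or_pos c with rfl | hc
        · have key : ∀ W, ge (2 :: v) W → ge (2 :: (List.replicate z 0 ++ x :: u1)) (sub z W) := by
            intro W hW
            cases W with
            | nil => exact ge_nil _
            | cons b W =>
              have b3 : b = 0 ∨ b = 1 ∨ b = 2 := by fin_cases b <;> simp
              rcases b3 with rfl | rfl | rfl
              · exact hsm x _ _
              · exact hone x _ _ hx
              · rw [ge_cons] at hW
                simp only [lt_self_iff_false, true_and, false_or] at hW
                simp only [sub_cons, blk, List.cons_append, ge_cons, ge_pre]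
                right
                exact ⟨trivial, hR rfl W hW⟩
          refine ⟨2 :: v, 0, 0, ?_, ?_, Or.inr ⟨2, _, by simp, by simp, fun _ => key⟩⟩
          · apply avoid_cons hv
            intro hg
            exact hself (key _ hg)
          · apply V3_ext <;> rw [hTe, hTv] <;> simp [ee, cnt] <;> ring
        · obtain ⟨c, rfl⟩ := Nat.exists_eq_add_of_le' hc
          refine ⟨1 :: v, c, 0, ?_, ?_, Or.inr ⟨2, _, by simp; rfl, by simp, ?_⟩⟩
          · apply avoid_cons hv
            simp [ge]
          · apply V3_ext <;> rw [hTe, hTv] <;> simp [ee, cnt] <;> ring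
          · intro _ W hW
            cases W with
            | nil => exact ge_nil _
            | cons b W =>
              have b3 : b = 0 ∨ b = 1 ∨ b = 2 := by fin_cases b <;> simp
              rcases b3 with rfl | rfl | rfl
              · exact hsm x _ _
              · exact hone x _ _ hx
              · simp [ge] at hW
      · obtain ⟨k, rfl⟩ := Nat.exists_eq_add_of_lt hz
        refine ⟨1 :: v, c + k, 0, ?_, ?_, Or.inr ⟨2, _, by simp; rfl, by simp, ?_⟩⟩
        · apply avoid_cons hv
          simp [ge]
        · apply V3_ext <;> rw [hTe, hTv] <;> simp [ee, cnt] <;> ring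
        · intro hck W hW
          have hc : c = 0 := by omega
          have hk : k = 0 := by omega
          subst hk
          rcases hR with hR | ⟨x, u1, rfl, hx, hR⟩
          · omega
          cases W with
          | nil => exact ge_nil _
          | cons b W =>
            have b3 : b = 0 ∨ b = 1 ∨ b = 2 := by fin_cases b <;> simp
            rcases b3 with rfl | rfl | rfl
            · exact hsm x _ _
            · rw [ge_cons] at hW
              simp only [lt_self_iff_false, true_and, false_or] at hW
              simp only [sub_cons, blk, List.cons_append, ge_cons]
              right
              refine ⟨trivial, ?_⟩
              rw [add_zero, ge_pre]
              exact hR hc W hW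
            · simp [ge] at hW

/-- bounding property -/
def BD (W : List (Fin 3)) (L : V3 →ₗ[ℝ] ℝ) : Prop :=
  (∃ W2, W = 2 :: W2) ∧ 0 ≤ L (ee 2) ∧ L (ee 1) ≤ L (ee 2) ∧ L (ee 0) ≤ L (ee 2) ∧
    ∃ K : ℝ, ∀ u, avoid W u → L (cnt u) ≤ K

lemma Tn_ee0 (n) : Tn n (ee 0) = ee 1 - ee 2 := by apply V3_ext <;> simp [ee]
lemma Tn_ee1 (n) : Tn n (ee 1) = ee 0 := by apply V3_ext <;> simp [ee]
lemma Tn_ee2 (n : ℕ) : Tn n (ee 2) = ee 2 - (n:ℝ) • (ee 1 - ee 2) := by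
  apply V3_ext <;> simp [ee]; ring

lemma BD_step (n : ℕ) {W L} (h : BD W L) : BD (sub n W) (L.comp (Tn n)) := by
  obtain ⟨⟨W2, rfl⟩, h2, h12, h02, K, hK⟩ := h
  have hn : (0:ℝ) ≤ n := Nat.cast_nonneg n
  refine ⟨⟨_, by simp only [sub_cons, blk, List.cons_append]; rfl⟩, ?_, ?_, ?_, K + (n + 2) * (L (ee 2) - L (ee 1)), ?_⟩
  · simp [Tn_ee2]; nlinarith
  · simp [Tn_ee2, Tn_ee1]; nlinarith
  · simp [Tn_ee2, Tn_ee0]; nlinarith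
  · intro u hu
    obtain ⟨v, c, z, hv, hT, -⟩ := step_exists n W2 u hu
    have := hK v hv
    have h3 : (![0, 1, -1] : V3) = ee 1 - ee 2 := by apply V3_ext <;> simp [ee]
    simp only [LinearMap.comp_apply]
    rw [hT, h3]
    simp only [map_add, map_smul, map_sub, smul_eq_mul]
    have : (0:ℝ) ≤ c + z := by positivity
    nlinarith

lemma BD_base : BD [2, 0] (LinearMap.proj 2) := by
  refine ⟨⟨_, rfl⟩, by simp [ee], by simp [ee], by simp [ee], 1, ?_⟩
  intro u
  simp only [LinearMap.proj_apply]
  induction u with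
  | nil => intro _; simp [cnt]
  | cons a u ih =>
    intro h
    by_cases ha : a = 2
    · subst ha
      cases u with
      | nil => simp [cnt, ee]
      | cons b u =>
        exfalso
        apply h _ List.suffix_rfl
        simp only [ge_cons]
        right
        refine ⟨trivial, ?_⟩
        by_cases hb : b = 0
        · right; exact ⟨hb, ge_nil _⟩
        · left; exact Fin.pos_of_ne_zero hb
    · have := ih (fun t ht => h t (ht.trans (List.suffix_cons a u)))
      simp only [cnt, Pi.add_apply, ee]
      rw [if_neg (Ne.symm ha)]; linarith

lemma BD_main (ns : List ℕ) : BD (Fl ns [2, 0]) ((LinearMap.proj 2).comp (TT ns)) := by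
  induction ns with
  | nil => rw [Fl_nil]; exact BD_base
  | cons n ns ih => rw [Fl_cons]; exact BD_step n ih

end IMX

namespace IMX

lemma shift_iter (s : Seq3) (r i : ℕ) : shift^[r] s i = s (i + r) := by
  induction r generalizing s with
  | zero => rfl
  | succ r ih =>
    rw [Function.iterate_succ_apply, ih]
    show s (i + r + 1) = _
    rfl

def tk : Seq3 → ℕ → List (Fin 3)
  | _, 0 => []
  | s, N + 1 => s 0 :: tk (shift s) N

lemma kappa_eq (s : Seq3) : kappa s = ee (s 0) := rfl

lemma birk_zero (s : Seq3) : birk s 0 = 0 := by simp [birk]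

lemma birk_succ (s : Seq3) (N : ℕ) : birk s (N + 1) = kappa s + birk (shift s) N := by
  simp only [birk, Finset.sum_range_succ', Function.iterate_succ_apply]
  rw [add_comm]; rfl

lemma birk_succ' (s : Seq3) (N : ℕ) : birk s (N + 1) = birk s N + ee (s N) := by
  simp only [birk, Finset.sum_range_succ, kappa_eq, shift_iter, zero_add]

lemma birk_add (s : Seq3) (M N : ℕ) : birk s (M + N) = birk s M + birk (shift^[M] s) N := by
  induction M generalizing s with
  | zero => simp [birk_zero]
  | succ M ih =>
    rw [show M + 1 + N = M + N + 1 by ring, birk_succ, birk_succ, ih, Function.iterate_succ_apply,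
      add_assoc]

lemma birk_tk (s : Seq3) (N : ℕ) : birk s N = cnt (tk s N) := by
  induction N generalizing s with
  | zero => simp [birk_zero, tk, cnt]
  | succ N ih => rw [birk_succ, ih]; rfl

lemma tk_length (s N) : (tk s N).length = N := by
  induction N generalizing s with
  | zero => rfl
  | succ N ih => simp [tk, ih]

lemma birk_nonneg (s N i) : 0 ≤ birk s N i := by rw [birk_tk]; exact cnt_nonneg _ _

lemma birk_sum (s N) : birk s N 0 + birk s N 1 + birk s N 2 = N := by
  rw [birk_tk, cnt_sum, tk_length]

lemma birk_le (s N i) : birk s N i ≤ N := by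
  have := birk_sum s N
  have h0 := birk_nonneg s N 0
  have h1 := birk_nonneg s N 1
  have h2 := birk_nonneg s N 2
  fin_cases i <;> simp <;> linarith

lemma lexLe_iff (s t : Seq3) :
    lexLe s t ↔ s 0 < t 0 ∨ (s 0 = t 0 ∧ lexLe (shift s) (shift t)) := by
  constructor
  · rintro (rfl | ⟨n, h1, h2⟩)
    · exact Or.inr ⟨rfl, Or.inl rfl⟩
    · cases n with
      | zero => exact Or.inl h2
      | succ n => exact Or.inr ⟨h1 0 (by omega), Or.inr ⟨n, fun i hi => h1 (i+1) (by omega), h2⟩⟩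
  · rintro (h | ⟨h, h2⟩)
    · exact Or.inr ⟨0, by simp, h⟩
    · rcases h2 with h2 | ⟨n, h1, h2⟩
      · left; ext i
        cases i with
        | zero => rw [h]
        | succ i => rw [show s (i+1) = shift s i from rfl, h2]; rfl
      · refine Or.inr ⟨n+1, ?_, h2⟩
        intro i hi
        cases i with
        | zero => exact h
        | succ i => exact h1 i (by omega)

def pre : Seq3 → List (Fin 3) → Prop
  | _, [] => True
  | s, a :: l => s 0 = a ∧ pre (shift s) l

def ges : Seq3 → List (Fin 3) → Prop
  | _, [] => True
  | s, b :: W => b < s 0 ∨ (s 0 = b ∧ ges (shift s) W)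

lemma ges_lex {s t : Seq3} {W} (h : lexLe s t) (hs : ges s W) : ges t W := by
  induction W generalizing s t with
  | nil => trivial
  | cons b W ih =>
    rw [lexLe_iff] at h
    rcases h with h | ⟨h, h'⟩ <;> rcases hs with hs | ⟨rfl, hs⟩
    · left; exact hs.trans h
    · left; exact h
    · left; rwa [← h]
    · right; exact ⟨h.symm, ih h' hs⟩

lemma ges_of_ge_tk {s : Seq3} {N W} (h : ge (tk s N) W) : ges s W := by
  induction W generalizing s N with
  | nil => trivial
  | cons b W ih =>
    cases N with
    | zero => simp [tk, ge] at h
    | succ N =>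
      rw [tk, ge_cons] at h
      rcases h with h | ⟨h, h'⟩
      · left; exact h
      · right; exact ⟨h, ih h'⟩

lemma suffix_tk {s : Seq3} {N} {t} (h : t <:+ tk s N) : ∃ k M, t = tk (shift^[k] s) M := by
  induction N generalizing s with
  | zero =>
    rw [tk, List.suffix_nil] at h
    exact ⟨0, 0, h⟩
  | succ N ih =>
    rw [tk, List.suffix_cons_iff] at h
    rcases h with rfl | h
    · exact ⟨0, N+1, rfl⟩
    · obtain ⟨k, M, h⟩ := ih h
      exact ⟨k+1, M, h⟩

lemma pre_ges {s : Seq3} {W} (h : pre s W) : ges s W := by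
  induction W generalizing s with
  | nil => trivial
  | cons b W ih => exact Or.inr ⟨h.1, ih h.2⟩

lemma pre_sandwich {s t : Seq3} {W} (h : lexLe s t) (ht : pre t W) (hs : ges s W) : pre s W := by
  induction W generalizing s t with
  | nil => trivial
  | cons b W ih =>
    obtain ⟨rfl, ht⟩ := ht
    rw [lexLe_iff] at h
    rcases h with h | ⟨h, h'⟩ <;> rcases hs with hs | ⟨hs', hs⟩
    · exact absurd hs (not_lt.2 h.le)
    · exact absurd hs' h.ne
    · exact absurd hs (by rw [h]; exact lt_irrefl _)
    · exact ⟨h, ih h' ht hs⟩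

lemma pre_append {s : Seq3} {l m} : pre s (l ++ m) ↔ pre s l ∧ pre (shift^[l.length] s) m := by
  induction l generalizing s with
  | nil => simp [pre]
  | cons a l ih => simp [pre, ih, and_assoc]

lemma pre_iff_tk {s : Seq3} {l} : pre s l ↔ tk s l.length = l := by
  induction l generalizing s with
  | nil => simp [pre, tk]
  | cons a l ih => simp [pre, tk, ih]

lemma ges_append {s : Seq3} {l m} (h : ges s (l ++ m)) : ges s l := by
  induction l generalizing s with
  | nil => trivial
  | cons a l ih =>
    rcases h with h | ⟨h, h'⟩
    · exact Or.inl h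
    · exact Or.inr ⟨h, ih h'⟩

def ext (l : List (Fin 3)) : Seq3 := fun i => l.getD i 0

lemma shift_ext (a l) : shift (ext (a :: l)) = ext l := by
  ext i; simp [shift, ext]

lemma ext_le_iff {s : Seq3} {W} : lexLe (ext W) s ↔ ges s W := by
  induction W generalizing s with
  | nil =>
    refine ⟨fun _ => trivial, fun _ => ?_⟩
    by_cases h : ∃ n, s n ≠ 0
    · classical
      right
      refine ⟨Nat.find h, fun i hi => ?_, ?_⟩
      · have := Nat.find_min h hi
        simp at this
        simp [ext, this]
      · simpa [ext] using Fin.pos_of_ne_zero (Nat.find_spec h)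
    · left
      push Not at h
      ext i; simp [ext, h]
  | cons b W ih =>
    rw [lexLe_iff, shift_ext, ih]
    show b < s 0 ∨ (b = s 0 ∧ _) ↔ _
    simp only [ges, eq_comm]

/-- uniform way to prove frequencies -/
lemma hasFreq_of_bdd {s : Seq3} {β : V3} {C : ℝ} (h : ∀ N i, |birk s N i - N * β i| ≤ C) :
    hasFreq s β := by
  unfold hasFreq
  rw [tendsto_pi_nhds]
  intro i
  have h1 : Tendsto (fun N : ℕ => C * ((N:ℝ))⁻¹) atTop (𝓝 0) := by
    simpa using (tendsto_inv_atTop_nhds_zero_nat (𝕜 := ℝ)).const_mul C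
  rw [tendsto_iff_dist_tendsto_zero]
  refine squeeze_zero' (Eventually.of_forall fun N => dist_nonneg) ?_ h1
  filter_upwards [eventually_gt_atTop 0] with N hN
  have hN' : (0:ℝ) < N := by exact_mod_cast hN
  rw [Real.dist_eq]
  have : ((N:ℝ)⁻¹ • birk s N) i - β i = (birk s N i - N * β i) * (N:ℝ)⁻¹ := by
    simp only [Pi.smul_apply, smul_eq_mul]
    field_simp
  rw [this, abs_mul, abs_of_pos (inv_pos.2 hN')]
  exact mul_le_mul_of_nonneg_right (h N i) (inv_pos.2 hN').le

lemma freq_lin {s : Seq3} {β : V3} (h : hasFreq s β) (L : V3 →ₗ[ℝ] ℝ) :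
    Tendsto (fun N : ℕ => (N:ℝ)⁻¹ * L (birk s N)) atTop (𝓝 (L β)) := by
  have hc : Continuous L := L.continuous_of_finiteDimensional
  have := (hc.tendsto β).comp h
  simpa [Function.comp_def] using this

lemma lower {w : Seq3} {β : V3} (hw : w ∈ MaxSet) (hf : hasFreq w β) (ns : List ℕ)
    (hp : 0 < TT ns β 2) : ges w (Fl ns [2, 0]) := by
  by_contra hcon
  obtain ⟨-, -, -, -, K, hK⟩ := BD_main ns
  have hav : ∀ N, avoid (Fl ns [2, 0]) (tk w N) := by
    intro N t ht hg
    obtain ⟨k, M, rfl⟩ := suffix_tk ht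
    exact hcon (ges_lex (hw.2 k) (ges_of_ge_tk hg))
  have h1 := freq_lin hf ((LinearMap.proj 2).comp (TT ns))
  have h2 : Tendsto (fun N : ℕ => ((N:ℝ))⁻¹ * K) atTop (𝓝 0) := by
    simpa using (tendsto_inv_atTop_nhds_zero_nat (𝕜 := ℝ)).mul_const K
  have h3 := le_of_tendsto_of_tendsto' h1 h2 (fun N => by
    apply mul_le_mul_of_nonneg_left _ (by positivity)
    rw [birk_tk]
    exact hK _ (hav N))
  exact absurd hp (not_lt.2 h3)

/-! ### existence of maximal sequences with given frequency -/

lemma D_cons {y y' : Seq3} {β : V3} {C : ℝ} (hy : shift y = y') (hβ : ∀ i, 0 ≤ β i ∧ β i ≤ 1)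
    (h : ∀ N i, |birk y' N i - N * β i| ≤ C) : ∀ N i, |birk y N i - N * β i| ≤ C + 2 := by
  intro N i
  have hC : 0 ≤ C := (abs_nonneg _).trans (h 0 0)
  cases N with
  | zero => simp [birk_zero]; linarith
  | succ N =>
    rw [birk_succ, hy]
    have := abs_le.1 (h N i)
    have h1 : kappa y i = 0 ∨ kappa y i = 1 := by
      simp only [kappa]; split_ifs <;> simp
    have h2 := hβ i
    rw [abs_le]
    push_cast
    simp only [Pi.add_apply]
    rcases h1 with h1 | h1 <;> rw [h1] <;> constructor <;> nlinarith

lemma floor_step {b : ℝ} (h0 : 0 ≤ b) (h1 : b ≤ 1) (i : ℕ) :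
    ⌊((i + 1 : ℕ) : ℝ) * b⌋₊ = ⌊(i:ℝ) * b⌋₊ ∨ ⌊((i + 1 : ℕ) : ℝ) * b⌋₊ = ⌊(i:ℝ) * b⌋₊ + 1 := by
  have e : ((i + 1 : ℕ) : ℝ) * b = i * b + b := by push_cast; ring
  have hi : (0:ℝ) ≤ i * b := by positivity
  have l : ⌊(i:ℝ) * b⌋₊ ≤ ⌊((i + 1 : ℕ) : ℝ) * b⌋₊ := Nat.floor_mono (by rw [e]; linarith)
  have u : ⌊((i + 1 : ℕ) : ℝ) * b⌋₊ ≤ ⌊(i:ℝ) * b⌋₊ + 1 := by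
    rw [← Nat.floor_add_one hi]
    exact Nat.floor_mono (by rw [e]; linarith)
  omega

open Classical in
noncomputable def fseq (b γ : ℝ) : Seq3 := fun i =>
  if ⌊((i + 1 : ℕ) : ℝ) * b⌋₊ = ⌊(i:ℝ) * b⌋₊ then
    (if ⌊((i - ⌊(i:ℝ) * b⌋₊ + 1 : ℕ) : ℝ) * γ⌋₊ = ⌊((i - ⌊(i:ℝ) * b⌋₊ : ℕ) : ℝ) * γ⌋₊ then 0 else 1)
  else 2

lemma fl_le {b : ℝ} (h1 : b ≤ 1) (i : ℕ) : ⌊(i:ℝ) * b⌋₊ ≤ i := by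
  apply Nat.floor_le_of_le
  have : (0:ℝ) ≤ i := Nat.cast_nonneg i
  nlinarith

lemma fseq_cnt {b γ : ℝ} (h0 : 0 ≤ b) (h1 : b ≤ 1) (g0 : 0 ≤ γ) (g1 : γ ≤ 1) (N : ℕ) :
    birk (fseq b γ) N 2 = ⌊(N:ℝ) * b⌋₊ ∧
    birk (fseq b γ) N 1 = ⌊((N - ⌊(N:ℝ) * b⌋₊ : ℕ) : ℝ) * γ⌋₊ := by
  induction N with
  | zero => simp [birk_zero]
  | succ N ih =>
    rw [birk_succ']
    simp only [Pi.add_apply, ih.1, ih.2]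
    have hle := fl_le h1 N
    rcases floor_step h0 h1 N with h | h
    · have e : N + 1 - ⌊(N:ℝ) * b⌋₊ = N - ⌊(N:ℝ) * b⌋₊ + 1 := by omega
      rw [h, e]
      rcases floor_step g0 g1 (N - ⌊(N:ℝ) * b⌋₊) with h' | h'
      · simp only [fseq, h, h', if_true, ee]
        simp
      · have ne : ¬ (⌊((N - ⌊(N:ℝ) * b⌋₊ + 1 : ℕ) : ℝ) * γ⌋₊ = ⌊((N - ⌊(N:ℝ) * b⌋₊ : ℕ) : ℝ) * γ⌋₊) := by
          omega
        simp only [fseq, h, if_true, if_neg ne, ee]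
        rw [h']
        simp
    · have ne : ¬ (⌊((N + 1 : ℕ) : ℝ) * b⌋₊ = ⌊(N:ℝ) * b⌋₊) := by omega
      have e : N + 1 - ⌊((N + 1 : ℕ) : ℝ) * b⌋₊ = N - ⌊(N:ℝ) * b⌋₊ := by omega
      simp only [fseq, if_neg ne, ee]
      rw [e, h]
      simp

lemma fseq_run {b γ : ℝ} (h0 : 0 ≤ b) (h1 : b ≤ 1) (i a : ℕ)
    (h : ∀ j, j < a → fseq b γ (j + i) = 2) : (a:ℝ) * (1 - b) ≤ 1 := by
  have key : ∀ a, (∀ j, j < a → fseq b γ (j + i) = 2) →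
      ⌊((a + i : ℕ) : ℝ) * b⌋₊ = ⌊(i:ℝ) * b⌋₊ + a := by
    intro a
    induction a with
    | zero => intro _; simp
    | succ a ih =>
      intro h
      have h2 := ih (fun j hj => h j (by omega))
      have h3 := h a (by omega)
      rcases floor_step h0 h1 (a + i) with h' | h'
      · exfalso
        simp only [fseq, h', if_true] at h3
        split_ifs at h3 <;> simp at h3
      · rw [show a + 1 + i = a + i + 1 by ring, h', h2]; ring
  have h2 := key a h
  have h3 : ((⌊((a + i : ℕ) : ℝ) * b⌋₊ : ℕ) : ℝ) ≤ ((a + i : ℕ) : ℝ) * b := Nat.floor_le (by positivity)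
  have h4 := Nat.lt_floor_add_one ((i:ℝ) * b)
  rw [h2] at h3
  push_cast at h3
  nlinarith

lemma exists_max {β : V3} (hβ : β ∈ Delta') :
    ∃ w ∈ MaxSet, ∃ C : ℝ, ∀ N i, |birk w N i - N * β i| ≤ C := by
  obtain ⟨⟨hn, hs⟩, h2⟩ := hβ
  have hle : ∀ i, 0 ≤ β i ∧ β i ≤ 1 := by
    intro i
    refine ⟨hn i, ?_⟩
    have a0 := hn 0; have a1 := hn 1; have a2 := hn 2
    fin_cases i <;> simp <;> linarith
  by_cases hb : β 2 = 1
  · refine ⟨fun _ => 2, ⟨rfl, fun r => Or.inl ?_⟩, ?_⟩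
    · ext i; rw [shift_iter]
    · have hz : β = ee 2 := by
        have a0 := hn 0; have a1 := hn 1
        apply V3_ext <;> simp [ee] <;> linarith
      refine ⟨0, ?_⟩
      intro N i
      have : ∀ N : ℕ, birk (fun _ => 2) N = (N:ℝ) • ee 2 := by
        intro N
        induction N with
        | zero => simp [birk_zero]
        | succ N ih => rw [birk_succ', ih]; push_cast; rw [add_smul, one_smul]
      rw [this, hz]; simp
  · have hb1 : β 2 < 1 := lt_of_le_of_ne (hle 2).2 hb
    set b := β 2 with hbd
    set γ := β 1 / (1 - b) with hγ
    have hpos : 0 < 1 - b := by linarith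
    have g0 : 0 ≤ γ := div_nonneg (hn 1) hpos.le
    have g1 : γ ≤ 1 := by
      rw [hγ, div_le_one hpos]
      have := hn 0; linarith
    have hγb : (1 - b) * γ = β 1 := by rw [hγ]; field_simp
    have hD : ∀ N i, |birk (fseq b γ) N i - N * β i| ≤ 3 := by
      intro N
      obtain ⟨c2, c1⟩ := fseq_cnt h2.le hb1.le g0 g1 N
      have cs := birk_sum (fseq b γ) N
      have hN : (0:ℝ) ≤ N := Nat.cast_nonneg N
      have f1 : ((⌊(N:ℝ) * b⌋₊ : ℕ) : ℝ) ≤ N * b := Nat.floor_le (by positivity)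
      have f2 := Nat.lt_floor_add_one ((N:ℝ) * b)
      have hcast : ((N - ⌊(N:ℝ) * b⌋₊ : ℕ) : ℝ) = N - (⌊(N:ℝ) * b⌋₊ : ℕ) := by
        rw [Nat.cast_sub (fl_le hb1.le N)]
      have f3 : ((⌊((N - ⌊(N:ℝ) * b⌋₊ : ℕ) : ℝ) * γ⌋₊ : ℕ) : ℝ) ≤ _ :=
        Nat.floor_le (a := ((N - ⌊(N:ℝ) * b⌋₊ : ℕ) : ℝ) * γ) (by positivity)
      have f4 := Nat.lt_floor_add_one (((N - ⌊(N:ℝ) * b⌋₊ : ℕ) : ℝ) * γ)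
      rw [← c1] at f3 f4
      rw [← c2] at f1 f2
      rw [hcast, ← c2] at f3 f4
      have e1 : (N:ℝ) * β 1 = N * (1 - b) * γ := by rw [mul_assoc, hγb]
      have q1 : |birk (fseq b γ) N 1 - N * β 1| ≤ 1 := by
        rw [abs_le, e1]; constructor <;> nlinarith
      have q2 : |birk (fseq b γ) N 2 - N * β 2| ≤ 1 := by
        rw [abs_le, ← hbd]; constructor <;> nlinarith
      have q0 : |birk (fseq b γ) N 0 - N * β 0| ≤ 3 := by
        have := abs_le.1 q1
        have := abs_le.1 q2
        have : β 0 = 1 - β 1 - β 2 := by linarith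
        rw [this, abs_le]; constructor <;> linarith
      intro i
      have i3 : i = 0 ∨ i = 1 ∨ i = 2 := by fin_cases i <;> simp
      rcases i3 with rfl | rfl | rfl
      · exact q0
      · linarith
      · linarith
    obtain ⟨a, ha⟩ := exists_nat_gt (1 / (1 - b))
    rw [div_lt_iff₀ hpos] at ha
    have ha0 : 0 < a := by
      rcases Nat.eq_zero_or_pos a with rfl | h
      · simp at ha; linarith
      · exact h
    let Y : ℕ → Seq3 := fun a i => if i < a then 2 else fseq b γ (i - a)
    have hYs : ∀ a, shift (Y (a+1)) = Y a := by
      intro a; ext i; simp [shift, Y]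
    have hYD : ∀ a, ∃ C, ∀ N i, |birk (Y a) N i - N * β i| ≤ C := by
      intro a
      induction a with
      | zero => exact ⟨3, by simpa [Y] using hD⟩
      | succ a ih =>
        obtain ⟨C, hC⟩ := ih
        exact ⟨C + 2, D_cons (hYs a) hle hC⟩
    obtain ⟨C, hC⟩ := hYD a
    have h00 : fseq b γ 0 ≠ 2 := by
      have : ⌊((0 + 1 : ℕ) : ℝ) * b⌋₊ = ⌊((0:ℕ):ℝ) * b⌋₊ := by
        simp [Nat.floor_eq_zero, hb1]
      simp only [fseq, this, if_true]
      split_ifs <;> simp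
    refine ⟨Y a, ⟨by simp [Y, ha0], fun r => ?_⟩, C, hC⟩
    rcases Nat.eq_zero_or_pos r with rfl | hr
    · left; rfl
    · have hex : ∃ j, shift^[r] (Y a) j ≠ 2 ∧ j < a := by
        by_cases hra : r ≤ a
        · refine ⟨a - r, ?_, by omega⟩
          rw [shift_iter, Nat.sub_add_cancel hra]
          simpa [Y] using h00
        · by_contra hcon
          push Not at hcon
          have := fseq_run (b := b) (γ := γ) h2.le hb1.le (r - a) a (by
            intro j hj
            by_contra hne
            have := hcon j (by
              rw [shift_iter]
              have h1 : ¬ (j + r < a) := by omega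
              have h2 : j + r - a = j + (r - a) := by omega
              simp only [Y, if_neg h1, h2]
              exact hne)
            omega)
          linarith
      classical
      right
      refine ⟨Nat.find hex, fun i hi => ?_, ?_⟩
      · have hfa := (Nat.find_spec hex).2
        have := Nat.find_min hex hi
        have hia : i < a := by omega
        simp only [not_and_or, not_not] at this
        rcases this with h | h
        · rw [h]; simp [Y, hia]
        · exact absurd hia h
      · obtain ⟨h1, h2⟩ := Nat.find_spec hex
        have : Y a (Nat.find hex) = 2 := by
          simp only [Y]; rw [if_pos h2]
        rw [this]
        generalize shift^[r] (Y a) (Nat.find hex) = q at h1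
        fin_cases q <;> simp_all

end IMX

namespace IMX

lemma tk_add (s : Seq3) (M N : ℕ) : tk s (M + N) = tk s M ++ tk (shift^[M] s) N := by
  induction M generalizing s with
  | zero => simp [tk]
  | succ M ih => rw [show M + 1 + N = (M + N) + 1 by ring, tk, ih, tk]; rfl

lemma tk_getD (s : Seq3) (N i : ℕ) (h : i < N) : (tk s N).getD i 0 = s i := by
  induction N generalizing s i with
  | zero => omega
  | succ N ih =>
    cases i with
    | zero => rfl
    | succ i => rw [tk, List.getD_cons_succ, ih _ _ (by omega)]; rfl

lemma blk_pos (n a) : 1 ≤ (blk n a).length := by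
  fin_cases a <;> simp [blk]

lemma sub_len (n : ℕ) (l) : l.length ≤ (sub n l).length := by
  induction l with
  | nil => simp
  | cons a l ih =>
    rw [sub_cons, List.length_append, List.length_cons]
    have := blk_pos n a
    omega

/-- infinite substitution -/
def LL (n : ℕ) (x : Seq3) : Seq3 := fun i => (sub n (tk x (i+1))).getD i 0

lemma LL_eq (n : ℕ) (x : Seq3) (N i : ℕ) (h : i < (sub n (tk x N)).length) :
    (sub n (tk x N)).getD i 0 = LL n x i := by
  have h2 : i < (sub n (tk x (i+1))).length := by
    have := sub_len n (tk x (i+1)); rw [tk_length] at this; omega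
  unfold LL
  rcases le_total N (i+1) with hN | hN
  · obtain ⟨d, hd⟩ := Nat.exists_eq_add_of_le hN
    rw [hd, tk_add, sub_append, List.getD_append _ _ _ _ h]
  · obtain ⟨d, rfl⟩ := Nat.exists_eq_add_of_le hN
    rw [tk_add, sub_append, List.getD_append _ _ _ _ h2]

lemma LL_shift (n : ℕ) (x : Seq3) : shift^[(blk n (x 0)).length] (LL n x) = LL n (shift x) := by
  ext i
  have h2 : i < (sub n (tk (shift x) (i+1))).length := by
    have := sub_len n (tk (shift x) (i+1)); rw [tk_length] at this; omega
  rw [shift_iter, ← LL_eq n (shift x) (i+1) i h2, ← LL_eq n x (i+2)]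
  · rw [tk, sub_cons, List.getD_append_right _ _ _ _ (by omega)]
    congr 2; omega
  · rw [tk, sub_cons, List.length_append]; omega

lemma pre_of_getD {s : Seq3} {l} (h : ∀ i, i < l.length → s i = l.getD i 0) : pre s l := by
  induction l generalizing s with
  | nil => trivial
  | cons a l ih =>
    refine ⟨h 0 (by simp), ih fun i hi => ?_⟩
    have := h (i+1) (by simpa using hi)
    rw [List.getD_cons_succ] at this
    exact this

lemma LL_pre_tk (n : ℕ) (x : Seq3) (N) : pre (LL n x) (sub n (tk x N)) :=
  pre_of_getD fun i hi => (LL_eq n x N i hi).symm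

lemma LL_pre {n : ℕ} {x : Seq3} {A} (h : pre x A) : pre (LL n x) (sub n A) := by
  rw [pre_iff_tk] at h
  rw [← h]; exact LL_pre_tk n x _

lemma LL_pre0 (n : ℕ) (x : Seq3) : pre (LL n x) (blk n (x 0)) := by
  have := LL_pre_tk n x 1
  simpa [tk, sub] using this

lemma lexLe_pre {s t : Seq3} {l} (hs : pre s l) (ht : pre t l)
    (h : lexLe (shift^[l.length] s) (shift^[l.length] t)) : lexLe s t := by
  induction l generalizing s t with
  | nil => exact h
  | cons a l ih =>
    rw [lexLe_iff]
    exact Or.inr ⟨hs.1.trans ht.1.symm, ih hs.2 ht.2 h⟩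

lemma LL_head_pos (n x) : 0 < LL n x 0 := by
  have := LL_pre0 n x
  generalize x 0 = a at this
  fin_cases a <;> simp [blk, pre] at this <;> simp [this]

lemma LL_mono {n : ℕ} {x x' : Seq3} (h : lexLe x x') : lexLe (LL n x) (LL n x') := by
  rcases h with rfl | ⟨m, h1, h2⟩
  · exact Or.inl rfl
  · induction m generalizing x x' with
    | zero =>
      have p := LL_pre0 n x
      have p' := LL_pre0 n x'
      have sh := LL_shift n x'
      generalize x 0 = a at *
      generalize x' 0 = b at *
      have hab : (a = 0 ∧ b ≠ 0) ∨ (a = 1 ∧ b = 2) := by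
        have key : ∀ a b : Fin 3, a < b → (a = 0 ∧ b ≠ 0) ∨ (a = 1 ∧ b = 2) := by decide
        exact key a b h2
      rcases hab with ⟨rfl, hb⟩ | ⟨rfl, rfl⟩
      · rw [lexLe_iff]; left
        have : LL n x 0 = 1 := by simp [blk, pre] at p; exact p
        rw [this]
        have : LL n x' 0 = 2 := by
          fin_cases b
          · simp at hb
          · exact p'.1
          · exact p'.1
        rw [this]; decide
      · have e : blk n 1 = blk n 2 ++ [0] := by
          simp [blk, List.replicate_succ']
        rw [e, pre_append] at p
        refine lexLe_pre p.1 p' ?_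
        rw [lexLe_iff]; left
        rw [p.2.1, sh]
        exact LL_head_pos _ _
    | succ m ih =>
      have p := LL_pre0 n x
      have p' := LL_pre0 n x'
      have e := h1 0 (by omega)
      rw [← e] at p'
      refine lexLe_pre p p' ?_
      have sh := LL_shift n x'
      rw [← e] at sh
      rw [LL_shift, sh]
      exact ih (fun i hi => h1 (i+1) (by omega)) h2

lemma LL_state (n : ℕ) (i : ℕ) (x : Seq3) : ∃ k j, j < (blk n (x k)).length ∧
    i = (sub n (tk x k)).length + j ∧
    shift^[i] (LL n x) = shift^[j] (LL n (shift^[k] x)) := by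
  induction i using Nat.strong_induction_on generalizing x with
  | _ i ih =>
    by_cases h : i < (blk n (x 0)).length
    · exact ⟨0, i, h, by simp [tk, sub], rfl⟩
    · have hb := blk_pos n (x 0)
      obtain ⟨k, j, h1, h2, h3⟩ := ih (i - (blk n (x 0)).length) (by omega) (shift x)
      refine ⟨k+1, j, h1, ?_, ?_⟩
      · rw [tk, sub_cons, List.length_append]; omega
      · rw [Function.iterate_succ_apply, ← h3, ← LL_shift, ← Function.iterate_add_apply]
        congr 2; omega

lemma blk_inner (n a j) (h : j < (blk n a).length) (hj : 0 < j) : (blk n a).getD j 0 = 0 := by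
  obtain ⟨j, rfl⟩ := Nat.exists_eq_succ_of_ne_zero hj.ne'
  fin_cases a <;> simp [blk] at h ⊢

lemma getD_of_pre {s : Seq3} {l} (h : pre s l) (i) (hi : i < l.length) : s i = l.getD i 0 := by
  rw [pre_iff_tk] at h
  rw [← h, tk_getD]; exact hi

lemma lexLe_of_lt {s t : Seq3} (h : s 0 < t 0) : lexLe s t := by
  rw [lexLe_iff]; exact Or.inl h

lemma LL_max {n : ℕ} {x : Seq3} (h : x ∈ MaxSet) : LL n x ∈ MaxSet := by
  have h0 : LL n x 0 = 2 := by
    have := LL_pre0 n x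
    rw [h.1] at this
    exact this.1
  refine ⟨h0, fun r => ?_⟩
  obtain ⟨k, j, h1, h2, h3⟩ := LL_state n r x
  rw [h3]
  rcases Nat.eq_zero_or_pos j with rfl | hj
  · exact LL_mono (h.2 k)
  · apply lexLe_of_lt
    have hk : shift^[k] x 0 = x k := by rw [shift_iter, zero_add]
    have p := LL_pre0 n (shift^[k] x)
    rw [hk] at p
    rw [shift_iter, zero_add, getD_of_pre p j h1, blk_inner n _ j h1 hj, h0]
    decide

lemma cnt_sub (n : ℕ) (l) : cnt (sub n l) = ![(n+1) * cnt l 1 + n * cnt l 2, cnt l 0,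
    cnt l 1 + cnt l 2] := by
  have h : Tn n (cnt (sub n l) - ![(n+1) * cnt l 1 + n * cnt l 2, cnt l 0, cnt l 1 + cnt l 2]) = 0 := by
    rw [map_sub, Tn_cnt_sub]
    apply V3_ext <;> simp <;> ring
  exact sub_eq_zero.1 (Tn_inj _ _ h)

lemma bdd_of_t {y : Seq3} {β : V3} {C : ℝ} (hs : β 0 + β 1 + β 2 = 1) (hb : ∀ i, |β i| ≤ 1)
    (h : ∀ N, ∃ t : ℝ, ∀ i, |birk y N i - t * β i| ≤ C) :
    ∀ N i, |birk y N i - N * β i| ≤ 4 * C := by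
  intro N i
  obtain ⟨t, ht⟩ := h N
  have hN := birk_sum y N
  have e : (N:ℝ) - t = (birk y N 0 - t * β 0) + (birk y N 1 - t * β 1) + (birk y N 2 - t * β 2) := by
    rw [← hN]; linear_combination t * hs
  have b : |(N:ℝ) - t| ≤ 3 * C := by
    rw [e]
    have a0 := abs_le.1 (ht 0); have a1 := abs_le.1 (ht 1); have a2 := abs_le.1 (ht 2)
    rw [abs_le]; constructor <;> linarith
  have : birk y N i - N * β i = (birk y N i - t * β i) - (N - t) * β i := by ring
  rw [this]
  have h1 : |((N:ℝ) - t) * β i| ≤ 3 * C := by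
    rw [abs_mul]
    have := mul_le_mul b (hb i) (abs_nonneg _) ((abs_nonneg _).trans b)
    linarith
  have := abs_sub (birk y N i - t * β i) ((N - t) * β i)
  linarith [ht i]

lemma LL_bdd {n : ℕ} {x : Seq3} {β : V3} (hs : β 0 + β 1 + β 2 = 1) (hb : ∀ i, |β i| ≤ 1)
    {C : ℝ}
    (h : ∀ N i, |birk x N i - N * (((β 1 + β 2)⁻¹ • Tn n β) i)| ≤ C) :
    ∃ C', ∀ N i, |birk (LL n x) N i - N * β i| ≤ C' := by
  refine ⟨_, bdd_of_t (C := (2 * n + 2) * C + (n + 2)) hs hb fun N => ?_⟩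
  obtain ⟨k, j, h1, h2, h3⟩ := LL_state n N x
  refine ⟨k * (β 1 + β 2)⁻¹, fun i => ?_⟩
  have p := pre_iff_tk.1 (LL_pre_tk n x k)
  have hj : (j:ℝ) ≤ n + 2 := by
    have : (blk n (x k)).length ≤ n + 2 := by
      generalize x k = a
      fin_cases a <;> simp [blk]
    exact_mod_cast (by omega : j ≤ n + 2)
  rw [h2, birk_add, birk_tk (LL n x), p, cnt_sub, ← birk_tk]
  set e := birk (shift^[(sub n (tk x k)).length] (LL n x)) j
  have he0 : 0 ≤ e i := birk_nonneg _ _ _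
  have he1 : e i ≤ j := birk_le _ _ _
  have a0 := h k 0; have a1 := h k 1; have a2 := h k 2
  simp only [Pi.smul_apply, smul_eq_mul, Tn_0, Tn_1, Tn_2, ← mul_assoc] at a0 a1 a2
  set t := (k:ℝ) * (β 1 + β 2)⁻¹
  rw [abs_le] at a0 a1 a2
  have hC : 0 ≤ C := by linarith
  have hn : (0:ℝ) ≤ n := Nat.cast_nonneg n
  have hnC : 0 ≤ n * C := by positivity
  rw [Pi.add_apply]
  have i3 : i = 0 ∨ i = 1 ∨ i = 2 := by fin_cases i <;> simp
  rw [abs_le]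
  rcases i3 with rfl | rfl | rfl
  · simp only [Matrix.cons_val_zero]
    constructor <;> nlinarith
  · simp only [Matrix.cons_val_one, Matrix.cons_val_zero]
    constructor <;> nlinarith
  · simp only [Matrix.cons_val]
    constructor <;> nlinarith

end IMX

namespace IMX

def Pos : List ℕ → V3 → Prop
  | [], a => (∀ i, 0 ≤ a i) ∧ 0 < a 2
  | n :: ns, a => ((∀ i, 0 ≤ a i) ∧ 0 < a 2) ∧ Pos ns (Tn n a)

lemma Pos_base {ns a} (h : Pos ns a) : (∀ i, 0 ≤ a i) ∧ 0 < a 2 := by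
  cases ns with
  | nil => exact h
  | cons n ns => exact h.1

lemma Pos_smul {ns a} {c : ℝ} (hc : 0 < c) (h : Pos ns a) : Pos ns (c • a) := by
  induction ns generalizing a with
  | nil => exact ⟨fun i => mul_nonneg hc.le (h.1 i), mul_pos hc h.2⟩
  | cons n ns ih =>
    refine ⟨⟨fun i => mul_nonneg hc.le (h.1.1 i), mul_pos hc h.1.2⟩, ?_⟩
    rw [map_smul]; exact ih h.2

lemma lemE (ns : List ℕ) {β : V3} (hs : β 0 + β 1 + β 2 = 1) (h : Pos ns β) :
    ∃ y ∈ MaxSet, (∃ C : ℝ, ∀ N i, |birk y N i - N * β i| ≤ C) ∧ pre y (Bk ns 2) := by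
  induction ns generalizing β with
  | nil =>
    obtain ⟨w, hw, hC⟩ := exists_max (β := β) ⟨⟨h.1, hs⟩, h.2⟩
    exact ⟨w, hw, hC, hw.1, trivial⟩
  | cons n ns ih =>
    obtain ⟨⟨h1, h2⟩, h3⟩ := h
    have hp : 0 < β 1 + β 2 := by have := h1 1; linarith
    obtain ⟨x, hx, ⟨C, hC⟩, hpre⟩ := ih (β := (β 1 + β 2)⁻¹ • Tn n β) (by
      simp only [Pi.smul_apply, smul_eq_mul, Tn_0, Tn_1, Tn_2]
      field_simp; ring) (Pos_smul (inv_pos.2 hp) h3)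
    refine ⟨LL n x, LL_max hx, LL_bdd hs ?_ hC, LL_pre hpre⟩
    intro i
    rw [abs_of_nonneg (h1 i)]
    have a0 := h1 0; have a1 := h1 1
    fin_cases i <;> simp <;> linarith

/-- finite itineraries -/
def ns (n : ℕ → ℕ) (r : ℕ) : List ℕ := (List.range r).map n

lemma ns_zero (n) : ns n 0 = [] := rfl
lemma ns_succ (n r) : ns n (r+1) = ns n r ++ [n r] := by simp [ns, List.range_succ]
lemma ns_succ' (n r) : ns n (r+1) = n 0 :: ns (fun k => n (k+1)) r := by
  simp [ns, List.range_succ_eq_map, Function.comp_def]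
lemma ns_add (n r q) : ns n (r+q) = ns n r ++ ns (fun k => n (r+k)) q := by
  simp [ns, List.range_add, Function.comp_def]

lemma TT_ns_succ (n r v) : TT (ns n (r+1)) v = Tn (n r) (TT (ns n r) v) := by
  rw [ns_succ, TT_append]; rfl

def PP (n : ℕ → ℕ) : Set V3 := {β | β 0 + β 1 + β 2 = 1 ∧ ∀ r i, 0 ≤ TT (ns n r) β i}

lemma third_pos {n β} (h : β ∈ PP n) (r) : 0 < TT (ns n r) β 2 := by
  rcases (h.2 r 2).lt_or_eq with h2 | h2
  · exact h2
  exfalso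
  have a0 := h.2 r 0
  have a1 := h.2 r 1
  have b2 := h.2 (r+1) 2
  have c2 := h.2 (r+2) 2
  rw [TT_ns_succ, TT_ns_succ] at c2
  rw [TT_ns_succ] at b2
  simp only [Tn_0, Tn_1, Tn_2, ← h2] at b2 c2
  have z0 : TT (ns n r) β 0 = 0 := by linarith
  rw [z0] at c2
  have z1 : TT (ns n r) β 1 = 0 := by linarith
  have : β = 0 := TT_inj (ns n r) β (V3_ext z0 z1 h2.symm)
  have := h.1
  simp_all

lemma Pos_aux (r) : ∀ (n : ℕ → ℕ) (β : V3),
    (∀ r, (∀ i, 0 ≤ TT (ns n r) β i) ∧ 0 < TT (ns n r) β 2) → Pos (ns n r) β := by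
  induction r with
  | zero => intro n β h; exact h 0
  | succ r ih =>
    intro n β h
    rw [ns_succ']
    refine ⟨h 0, ih _ _ fun q => ?_⟩
    have := h (q+1)
    rwa [ns_succ'] at this

lemma Pos_of_PP {n β} (h : β ∈ PP n) (r) : Pos (ns n r) β :=
  Pos_aux r n β fun r => ⟨h.2 r, third_pos h r⟩

noncomputable def orb (α : V3) : ℕ → V3
  | 0 => α
  | r+1 => Tn ⌊orb α r 0 / orb α r 2⌋₊ (orb α r)

lemma exists_itin {α : V3} (h : α ∈ Delta') : ∃ n, α ∈ PP n := by
  obtain ⟨⟨h1, hs⟩, h2⟩ := h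
  have key : ∀ r, (∀ i, 0 ≤ orb α r i) ∧ 0 < orb α r 2 := by
    intro r
    induction r with
    | zero => exact ⟨h1, h2⟩
    | succ r ih =>
      obtain ⟨i1, i2⟩ := ih
      rw [orb]
      set a := orb α r
      have f1 : (⌊a 0 / a 2⌋₊ : ℝ) ≤ a 0 / a 2 := Nat.floor_le (div_nonneg (i1 0) i2.le)
      have f2 := Nat.lt_floor_add_one (a 0 / a 2)
      rw [le_div_iff₀ i2] at f1
      rw [div_lt_iff₀ i2] at f2
      have p2 : 0 < Tn ⌊a 0 / a 2⌋₊ a 2 := by rw [Tn_2]; linarith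
      refine ⟨fun i => ?_, p2⟩
      have i3 : i = 0 ∨ i = 1 ∨ i = 2 := by fin_cases i <;> simp
      rcases i3 with rfl | rfl | rfl
      · exact i1 1
      · rw [Tn_1]; linarith
      · exact p2.le
  let n : ℕ → ℕ := fun r => ⌊orb α r 0 / orb α r 2⌋₊
  refine ⟨n, hs, fun r => ?_⟩
  have : TT (ns n r) α = orb α r := by
    induction r with
    | zero => rfl
    | succ r ih => rw [TT_ns_succ, ih]; rfl
  rw [this]; exact (key r).1

lemma infimax_ges {n β J} (h : β ∈ PP n) (hJ : IsInfimax β J) (r) : ges J (Fl (ns n r) [2,0]) := by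
  rw [← ext_le_iff]
  apply hJ.2.2.2
  rintro w ⟨hw, hf⟩
  rw [ext_le_iff]
  exact lower hw hf _ (third_pos h r)

lemma infimax_pre {n β J} (h : β ∈ PP n) (hJ : IsInfimax β J) (r) : pre J (Bk (ns n r) 2) := by
  obtain ⟨y, hy, ⟨C, hC⟩, hp⟩ := lemE (ns n r) h.1 (Pos_of_PP h r)
  refine pre_sandwich (hJ.2.2.1 y ⟨hy, hasFreq_of_bdd hC⟩) hp ?_
  exact ges_append (m := Fl (ns n r) [0]) (infimax_ges h hJ r)

def ltt (A B : List (Fin 3)) : Prop := ∃ p a b A' B', A = p ++ a :: A' ∧ B = p ++ b :: B' ∧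
  ((a = 0 ∧ b = 1) ∨ (a = 1 ∧ b = 2 ∧ ∃ B'', B' = 0 :: B''))

lemma ltt_sub {A B} (n : ℕ) (h : ltt A B) : ltt (sub n A) (sub n B) := by
  obtain ⟨p, a, b, A', B', rfl, rfl, ⟨rfl, rfl⟩ | ⟨rfl, rfl, B'', rfl⟩⟩ := h
  · refine ⟨sub n p, 1, 2, sub n A', List.replicate (n+1) 0 ++ sub n B', ?_, ?_, Or.inr ⟨rfl, rfl, ?_⟩⟩
    · simp [sub_append, sub_cons, blk]
    · simp [sub_append, sub_cons, blk]
    · exact ⟨_, rfl⟩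
  · refine ⟨sub n p ++ 2 :: List.replicate n 0, 0, 1, sub n A', sub n B'', ?_, ?_, Or.inl ⟨rfl, rfl⟩⟩
    · simp [sub_append, sub_cons, blk, List.replicate_succ']
    · simp [sub_append, sub_cons, blk]

lemma ltt_Fl {A B} (L : List ℕ) (h : ltt A B) : ltt (Fl L A) (Fl L B) := by
  induction L with
  | nil => simpa [Fl_nil] using h
  | cons n L ih => rw [Fl_cons, Fl_cons]; exact ltt_sub n ih

lemma ltt_contra {A B J} (h : ltt A B) (hA : pre J A) (hB : ges J B) : False := by
  obtain ⟨p, a, b, A', B', rfl, rfl, h⟩ := h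
  have hab : a < b := by
    rcases h with ⟨rfl, rfl⟩ | ⟨rfl, rfl, -⟩ <;> decide
  clear h
  induction p generalizing J with
  | nil =>
    have e := hA.1
    rcases hB with h | ⟨h, -⟩
    · rw [e] at h; exact lt_asymm h hab
    · rw [e] at h; exact hab.ne h
  | cons c p ih =>
    have e := hA.1
    rcases hB with h | ⟨h, h'⟩
    · rw [e] at h; exact lt_irrefl _ h
    · exact ih hA.2 h'

lemma itin_aux {n n' β β' J} (h : β ∈ PP n) (h' : β' ∈ PP n') (hJ : IsInfimax β J)
    (hJ' : IsInfimax β' J) (r) (hr : ns n r = ns n' r) (hlt : n r < n' r) : False := by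
  have g := infimax_ges h hJ (r+1)
  have p := infimax_pre h' hJ' (r+1)
  rw [ns_succ, Fl_append, hr] at g
  rw [ns_succ, ← Fl_single, Fl_append] at p
  refine ltt_contra (ltt_Fl (ns n' r) ?_) p g
  obtain ⟨d, hd⟩ := Nat.exists_eq_add_of_lt hlt
  refine ⟨2 :: List.replicate (n r) 0, 0, 1, List.replicate d 0, [], ?_, ?_, Or.inl ⟨rfl, rfl⟩⟩
  · rw [Fl_cons, Fl_nil, hd, show n r + d + 1 = n r + (d+1) by ring]
    simp [sub, blk, List.replicate_succ, ← List.replicate_append_replicate]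
  · rw [Fl_cons, Fl_nil]
    simp [sub, blk]

lemma itin_unique {n n' β β' J} (h : β ∈ PP n) (h' : β' ∈ PP n') (hJ : IsInfimax β J)
    (hJ' : IsInfimax β' J) : n = n' := by
  have key : ∀ r, ns n r = ns n' r := by
    intro r
    induction r with
    | zero => rfl
    | succ r ih =>
      rw [ns_succ, ns_succ, ih]
      rcases lt_trichotomy (n r) (n' r) with hh | hh | hh
      · exact (itin_aux h h' hJ hJ' r ih hh).elim
      · rw [hh]
      · exact (itin_aux h' h hJ' hJ r ih.symm hh).elim
  ext r
  have := key (r+1)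
  rw [ns_succ, ns_succ, key r] at this
  simpa using this

end IMX

namespace IMX

lemma fin3 (i : Fin 3) : i = 0 ∨ i = 1 ∨ i = 2 := by fin_cases i <;> simp

lemma Bk_snoc (L : List ℕ) (m : ℕ) (i) : Bk (L ++ [m]) i = Fl L (blk m i) := by
  rw [← Fl_single, Fl_append, Fl_single]
  congr 1
  simp [Bk, sub]

lemma Fl_len_rep (L) (k : ℕ) (a) : (Fl L (List.replicate k a)).length = k * (Bk L a).length := by
  induction k with
  | zero => simp [Fl_nil']
  | succ k ih => rw [List.replicate_succ, Fl_cons', List.length_append, ih]; ring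

def ell (n : ℕ → ℕ) (r : ℕ) (i : Fin 3) : ℕ := (Bk (ns n r) i).length

lemma ell0 (n r) : ell n (r+1) 0 = ell n r 1 := by
  rw [ell, ns_succ, Bk_snoc]; simp [blk, Fl_single, ell]
lemma ell1 (n r) : ell n (r+1) 1 = ell n r 2 + (n r + 1) * ell n r 0 := by
  rw [ell, ns_succ, Bk_snoc]; simp [blk, Fl_cons', Fl_len_rep, ell]
lemma ell2 (n r) : ell n (r+1) 2 = ell n r 2 + n r * ell n r 0 := by
  rw [ell, ns_succ, Bk_snoc]; simp [blk, Fl_cons', Fl_len_rep, ell]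

lemma ell_pos (n r i) : 1 ≤ ell n r i := by
  induction r generalizing i with
  | zero => simp [ell, ns_zero, Bk]
  | succ r ih =>
    have := ih 0; have := ih 1; have := ih 2
    rcases fin3 i with rfl | rfl | rfl
    · rw [ell0]; omega
    · rw [ell1]; omega
    · rw [ell2]; omega

lemma ell0_step (n r) : ell n r 0 + 1 ≤ ell n (r+2) 0 := by
  rw [ell0, ell1]
  have := ell_pos n r 2
  nlinarith [Nat.zero_le (n r * ell n r 0)]

lemma ell01_ge (n : ℕ → ℕ) (k r : ℕ) (h : 2 * k ≤ r) : k ≤ ell n r 0 := by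
  induction k generalizing r with
  | zero => omega
  | succ k ih =>
    obtain ⟨q, rfl⟩ : ∃ q, r = q + 2 := ⟨r - 2, by omega⟩
    have := ih q (by omega)
    have := ell0_step n q
    omega

lemma ell2_mono (n : ℕ → ℕ) : Monotone (fun r => ell n r 2) :=
  monotone_nat_of_le_succ fun r => by rw [ell2]; omega

/-- the growth hypothesis -/
def Par (n : ℕ → ℕ) : Prop := ∀ R, ∃ d, n (R + 2 * d) ≠ 0

lemma ell2_unb {n} (h : Par n) (k : ℕ) : ∃ r, k ≤ ell n r 2 := by
  induction k with
  | zero => exact ⟨0, by omega⟩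
  | succ k ih =>
    obtain ⟨r, hr⟩ := ih
    obtain ⟨d, hd⟩ := h r
    refine ⟨r + 2 * d + 1, ?_⟩
    have h1 : ell n r 2 ≤ ell n (r + 2*d) 2 := ell2_mono n (by omega)
    rw [ell2]
    have := ell_pos n (r + 2*d) 0
    have : 1 ≤ n (r + 2*d) * ell n (r + 2*d) 0 := Nat.one_le_iff_ne_zero.2 (by positivity)
    omega

lemma ell_large {n} (h : Par n) (k : ℕ) : ∃ R, ∀ r, R ≤ r → ∀ i, k ≤ ell n r i := by
  obtain ⟨R, hR⟩ := ell2_unb h k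
  refine ⟨R + 2 * k + 2, fun r hr i => ?_⟩
  rcases fin3 i with rfl | rfl | rfl
  · exact ell01_ge n k r (by omega)
  · rw [← ell0]; exact ell01_ge n k _ (by omega)
  · exact hR.trans (ell2_mono n (by omega))

lemma not_lexLe {s t : Seq3} (h : ¬ lexLe s t) : ∃ m, (∀ i, i < m → s i = t i) ∧ t m < s m := by
  classical
  have hne : ∃ m, s m ≠ t m := by
    by_contra hc
    push Not at hc
    exact h (Or.inl (funext hc))
  refine ⟨Nat.find hne, fun i hi => not_not.1 (Nat.find_min hne hi), ?_⟩
  rcases lt_trichotomy (s (Nat.find hne)) (t (Nat.find hne)) with h1 | h1 | h1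
  · exact (h (Or.inr ⟨_, fun i hi => not_not.1 (Nat.find_min hne hi), h1⟩)).elim
  · exact (Nat.find_spec hne h1).elim
  · exact h1

lemma ges_contra {s t : Seq3} {W} {m} (hm : ∀ i, i < m → s i = t i) (hlt : t m < s m)
    (hW : m < W.length) (hs : pre s W) (ht : ges t W) : False := by
  induction W generalizing s t m with
  | nil => simp at hW
  | cons a W ih =>
    obtain ⟨rfl, hs⟩ := hs
    cases m with
    | zero =>
      rcases ht with h | ⟨h, -⟩
      · exact lt_asymm h hlt
      · exact hlt.ne h
    | succ m =>
      rcases ht with h | ⟨h, h'⟩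
      · rw [hm 0 (by omega)] at h; exact lt_irrefl _ h
      · exact ih (m := m) (fun i hi => hm (i+1) (by omega)) hlt (by simpa using hW) hs h'

lemma infimax_of_PP {n α β J} (hα : α ∈ PP n) (hJ : IsInfimax α J) (hp : Par n) (hβ : β ∈ PP n) :
    β ∈ Delta' ∧ IsInfimax β J := by
  have hd : β ∈ Delta' := ⟨⟨hβ.2 0, hβ.1⟩, third_pos hβ 0⟩
  have large : ∀ m : ℕ, ∃ r, m < (Bk (ns n r) 2).length := fun m => ell2_unb hp (m+1)
  refine ⟨hd, ?_, hJ.2.1, ?_, ?_⟩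
  · obtain ⟨w, hw, C, hC⟩ := exists_max hd
    exact ⟨w, hw, hasFreq_of_bdd hC⟩
  · rintro w ⟨hw, hf⟩
    by_contra hc
    obtain ⟨m, h1, h2⟩ := not_lexLe hc
    obtain ⟨r, hr⟩ := large m
    refine ges_contra h1 h2 hr (infimax_pre hα hJ r) ?_
    exact ges_append (m := Fl (ns n r) [0]) (lower hw hf _ (third_pos hβ r))
  · intro b hb
    by_contra hc
    obtain ⟨m, h1, h2⟩ := not_lexLe hc
    obtain ⟨r, hr⟩ := large m
    obtain ⟨y, hy, ⟨C, hC⟩, hpy⟩ := lemE (ns n r) hβ.1 (Pos_of_PP hβ r)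
    have hle := hb y ⟨hy, hasFreq_of_bdd hC⟩
    have hpJ := infimax_pre hα hJ r
    have e : ∀ i, i ≤ m → y i = J i := fun i hi => by
      rw [getD_of_pre hpy i (by omega), getD_of_pre hpJ i (by omega)]
    rcases hle with rfl | ⟨k, k1, k2⟩
    · rw [e m le_rfl] at h2; exact lt_irrefl _ h2
    · rcases lt_trichotomy k m with hk | rfl | hk
      · rw [h1 k hk, e k hk.le] at k2; exact lt_irrefl _ k2
      · rw [e k le_rfl] at k2; exact lt_asymm k2 h2
      · rw [k1 m hk, e m le_rfl] at h2; exact lt_irrefl _ h2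

lemma parity {n α α'} (hα : α ∈ PP n) (hα' : α' ∈ PP n) (hne : α ≠ α') : Par n := by
  intro R
  by_contra hc
  push Not at hc
  -- coordinates
  have step : ∀ β : V3, ∀ d, TT (ns n (R + 2*(d+1))) β =
      Tn (n (R + 2*d + 1)) (Tn 0 (TT (ns n (R + 2*d)) β)) := by
    intro β d
    rw [show R + 2*(d+1) = R + 2*d + 1 + 1 by ring, TT_ns_succ, TT_ns_succ, hc d]
  have s0 : ∀ β : V3, ∀ d, TT (ns n (R + 2*d)) β 0 = TT (ns n R) β 0 := by
    intro β d
    induction d with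
    | zero => rfl
    | succ d ih => rw [step, Tn_0, Tn_1, ih]; simp
  have s12 : ∀ β : V3, ∀ d, TT (ns n (R + 2*(d+1))) β 1 + TT (ns n (R + 2*(d+1))) β 2 =
      TT (ns n (R + 2*d)) β 2 - TT (ns n R) β 0 := by
    intro β d
    rw [step, ← s0 β d]; simp; ring
  have z0 : ∀ β ∈ PP n, TT (ns n R) β 0 = 0 := by
    intro β hβ
    have hb : ∀ d : ℕ, TT (ns n (R + 2*d)) β 2 ≤ TT (ns n R) β 2 - d * TT (ns n R) β 0 := by
      intro d
      induction d with
      | zero => simp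
      | succ d ih =>
        have := s12 β d
        have := hβ.2 (R + 2*(d+1)) 1
        push_cast; linarith
    by_contra hx
    have hx : 0 < TT (ns n R) β 0 := lt_of_le_of_ne (hβ.2 R 0) (Ne.symm hx)
    obtain ⟨d, hd⟩ := exists_nat_gt (TT (ns n R) β 2 / TT (ns n R) β 0)
    rw [div_lt_iff₀ hx] at hd
    have := hb d
    have := hβ.2 (R + 2*d) 2
    linarith
  set A := fun d => TT (ns n (R + 2*d)) α with hA
  set B := fun d => TT (ns n (R + 2*d)) α' with hB
  have a0 : ∀ d, A d 0 = 0 := fun d => by rw [hA]; simp only; rw [s0, z0 α hα]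
  have b0 : ∀ d, B d 0 = 0 := fun d => by rw [hB]; simp only; rw [s0, z0 α' hα']
  have sA : ∀ d, A (d+1) 1 + A (d+1) 2 = A d 2 := fun d => by
    have := s12 α d; rw [z0 α hα, sub_zero] at this; exact this
  have sB : ∀ d, B (d+1) 1 + B (d+1) 2 = B d 2 := fun d => by
    have := s12 α' d; rw [z0 α' hα', sub_zero] at this; exact this
  have nA : ∀ d i, 0 ≤ A d i := fun d i => hα.2 _ i
  have nB : ∀ d i, 0 ≤ B d i := fun d i => hα'.2 _ i
  have hD : ∀ d, A d 1 * B d 2 - A d 2 * B d 1 = A 0 1 * B 0 2 - A 0 2 * B 0 1 := by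
    intro d
    induction d with
    | zero => rfl
    | succ d ih =>
      rw [← ih]
      have eA : A (d+1) = _ := step α d
      have eB : B (d+1) = _ := step α' d
      rw [eA, eB]
      have hh := a0 d
      have hh' := b0 d
      simp only [hA, hB] at hh hh' ⊢
      simp only [Tn_0, Tn_1, Tn_2, hh, hh']
      push_cast; ring
  have mA : ∀ d, A d 2 ≤ A 0 2 := by
    intro d
    induction d with
    | zero => rfl
    | succ d ih => have := sA d; have := nA (d+1) 1; linarith
  have mB : ∀ d, B d 2 ≤ B 0 2 := by
    intro d
    induction d with
    | zero => rfl
    | succ d ih => have := sB d; have := nB (d+1) 1; linarith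
  set D := A 0 1 * B 0 2 - A 0 2 * B 0 1 with hDd
  have key : ∀ d : ℕ, d * |D| ≤ B 0 2 * (A 0 2 - A d 2) + A 0 2 * (B 0 2 - B d 2) := by
    intro d
    induction d with
    | zero => simp
    | succ d ih =>
      have h1 : |D| ≤ A (d+1) 1 * B 0 2 + A 0 2 * B (d+1) 1 := by
        rw [← hD (d+1)]
        have e1 : A (d+1) 1 * B (d+1) 2 ≤ A (d+1) 1 * B 0 2 :=
          mul_le_mul_of_nonneg_left (mB _) (nA _ _)
        have e2 : A (d+1) 2 * B (d+1) 1 ≤ A 0 2 * B (d+1) 1 :=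
          mul_le_mul_of_nonneg_right (mA _) (nB _ _)
        have e3 := mul_nonneg (nA (d+1) 1) (nB (d+1) 2)
        have e4 := mul_nonneg (nA (d+1) 2) (nB (d+1) 1)
        rw [abs_le]; constructor <;> linarith
      have := sA d
      have := sB d
      push_cast
      have e1 : A (d+1) 1 = A d 2 - A (d+1) 2 := by linarith
      have e2 : B (d+1) 1 = B d 2 - B (d+1) 2 := by linarith
      rw [e1, e2] at h1
      nlinarith
  have D0 : D = 0 := by
    by_contra hne0
    have hp : 0 < |D| := abs_pos.2 hne0
    obtain ⟨d, hd⟩ := exists_nat_gt (2 * (A 0 2 * B 0 2) / |D|)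
    rw [div_lt_iff₀ hp] at hd
    have := key d
    have e1 := mul_nonneg (nB 0 2) (nA d 2)
    have e2 := mul_nonneg (nA 0 2) (nB d 2)
    nlinarith
  have hz : B 0 2 • α - A 0 2 • α' = 0 := by
    apply TT_inj (ns n R)
    rw [map_sub, map_smul, map_smul]
    change B 0 2 • A 0 - A 0 2 • B 0 = 0
    apply V3_ext
    · simp [a0, b0]
    · simp; linarith
    · simp; ring
  have c0 := congrFun hz 0
  have c1 := congrFun hz 1
  have c2 := congrFun hz 2
  simp only [Pi.sub_apply, Pi.smul_apply, smul_eq_mul, Pi.zero_apply] at c0 c1 c2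
  have hs := hα.1
  have hs' := hα'.1
  have : B 0 2 = A 0 2 := by
    linear_combination c0 + c1 + c2 - B 0 2 * hs + A 0 2 * hs'
  have hpos : A 0 2 ≠ 0 := (third_pos hα R).ne'
  rw [this, ← smul_sub, smul_eq_zero] at hz
  exact hne (sub_eq_zero.1 (hz.resolve_left hpos))

/-- letters occurring -/
def Occ (n : ℕ → ℕ) (r : ℕ) (i : Fin 3) : Prop := ∃ q, i ∈ Bk (ns (fun k => n (r+k)) q) 2

lemma ns_tail (n : ℕ → ℕ) (r q) : ns (fun k => n (r+k)) (q+1) = n r :: ns (fun k => n (r+1+k)) q := by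
  rw [ns_succ']
  congr 2
  ext k; congr 1; ring

lemma Occ_of {n : ℕ → ℕ} {r : ℕ} {i j} (h : Occ n (r+1) i) (hj : j ∈ blk (n r) i) : Occ n r j := by
  obtain ⟨q, hq⟩ := h
  refine ⟨q+1, ?_⟩
  rw [ns_tail, Bk, sub, List.mem_flatMap]
  exact ⟨i, hq, hj⟩

lemma Occ2 (n r) : Occ n r 2 := ⟨0, by simp [ns_zero, Bk]⟩

lemma Occ0_aux {n : ℕ → ℕ} (d r) (h : n (r + 2*d) ≠ 0) : Occ n r 0 := by
  induction d generalizing r with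
  | zero =>
    refine Occ_of (Occ2 n (r+1)) ?_
    simp [blk]; exact h
  | succ d ih =>
    have h1 : Occ n (r+2) 0 := ih (r+2) (by rw [show r + 2 + 2*d = r + 2*(d+1) by ring]; exact h)
    have h2 : Occ n (r+1) 1 := Occ_of h1 (by simp [blk])
    exact Occ_of h2 (by simp [blk])

lemma Occ_all {n : ℕ → ℕ} (h : Par n) (r i) : Occ n r i := by
  have h0 : ∀ r, Occ n r 0 := fun r => by
    obtain ⟨d, hd⟩ := h r
    exact Occ0_aux d r hd
  rcases fin3 i with rfl | rfl | rfl
  · exact h0 r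
  · exact Occ_of (h0 (r+1)) (by simp [blk])
  · exact Occ2 n r

lemma blk_occurs {n α J} (hα : α ∈ PP n) (hJ : IsInfimax α J) (hp : Par n) (r i) :
    ∃ k, pre (shift^[k] J) (Bk (ns n r) i) := by
  obtain ⟨q, hq⟩ := Occ_all hp r i
  obtain ⟨u, v, huv⟩ := List.append_of_mem hq
  have h := infimax_pre hα hJ (r+q)
  rw [ns_add, ← Fl_single, Fl_append, Fl_single, huv, Fl_append', Fl_cons', pre_append,
    pre_append] at h
  exact ⟨_, h.2.1⟩

def det3 (a b c : V3) : ℝ := a 0 * (b 1 * c 2 - b 2 * c 1) - a 1 * (b 0 * c 2 - b 2 * c 0)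
  + a 2 * (b 0 * c 1 - b 1 * c 0)

lemma det3_Tn (m a b c) : det3 (Tn m a) (Tn m b) (Tn m c) = - det3 a b c := by
  simp only [det3, Tn_0, Tn_1, Tn_2]; ring

lemma det3_TT (L a b c) : |det3 (TT L a) (TT L b) (TT L c)| = |det3 a b c| := by
  induction L generalizing a b c with
  | nil => rfl
  | cons m L ih => rw [TT_cons, TT_cons, TT_cons, ih, det3_Tn, abs_neg]

lemma PP_small {n β} (h : β ∈ PP n) (r i) : TT (ns n r) β i * ell n r i ≤ 1 := by
  have e := recon_sum (ns n r) β
  rw [h.1] at e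
  have p : ∀ i, 0 ≤ TT (ns n r) β i * ell n r i := fun i => mul_nonneg (h.2 r i) (Nat.cast_nonneg _)
  have p0 := p 0; have p1 := p 1; have p2 := p 2
  simp only [ell] at *
  rcases fin3 i with rfl | rfl | rfl <;> linarith

lemma det3_zero {n a b c} (hp : Par n) (ha : a ∈ PP n) (hb : b ∈ PP n) (hc : c ∈ PP n) :
    det3 a b c = 0 := by
  by_contra hne
  have hpos : 0 < |det3 a b c| := abs_pos.2 hne
  obtain ⟨k, hk⟩ := exists_nat_gt (6 / |det3 a b c|)
  rw [div_lt_iff₀ hpos] at hk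
  have hk0 : 1 ≤ k := by
    rcases Nat.eq_zero_or_pos k with rfl | h
    · simp at hk; linarith
    · exact h
  have hk0' : (1:ℝ) ≤ k := by exact_mod_cast hk0
  obtain ⟨R, hR⟩ := ell_large hp k
  have sm : ∀ β ∈ PP n, ∀ i, 0 ≤ TT (ns n R) β i ∧ TT (ns n R) β i * k ≤ 1 := by
    intro β hβ i
    refine ⟨hβ.2 R i, ?_⟩
    have h1 := PP_small hβ R i
    have h2 : (k:ℝ) ≤ ell n R i := by exact_mod_cast hR R le_rfl i
    exact (mul_le_mul_of_nonneg_left h2 (hβ.2 R i)).trans h1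
  have e := det3_TT (ns n R) a b c
  have sm1 : ∀ β ∈ PP n, ∀ i, TT (ns n R) β i ≤ 1 := fun β hβ i => by
    have := sm β hβ i
    nlinarith [this.1, this.2]
  have tri : ∀ i j l, 0 ≤ TT (ns n R) a i * (TT (ns n R) b j * TT (ns n R) c l) ∧
      k * (TT (ns n R) a i * (TT (ns n R) b j * TT (ns n R) c l)) ≤ 1 := by
    intro i j l
    have h1 := sm a ha i
    have h2 := sm b hb j
    have h3 := sm c hc l
    have q2 := sm1 b hb j
    have q3 := sm1 c hc l
    have h4 : TT (ns n R) b j * TT (ns n R) c l ≤ 1 := mul_le_one₀ q2 h3.1 q3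
    have h5 := mul_nonneg h2.1 h3.1
    refine ⟨mul_nonneg h1.1 h5, ?_⟩
    have := mul_le_one₀ h1.2 h5 h4
    linarith
  rw [← e] at hk
  have : k * |det3 (TT (ns n R) a) (TT (ns n R) b) (TT (ns n R) c)| ≤ 6 := by
    rw [← abs_of_nonneg (show (0:ℝ) ≤ k by positivity), ← abs_mul]
    have t1 := tri 0 1 2; have t2 := tri 0 2 1; have t3 := tri 1 0 2; have t4 := tri 1 2 0
    have t5 := tri 2 0 1; have t6 := tri 2 1 0
    simp only [det3]
    have kn : (0:ℝ) ≤ k := by positivity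
    have u1 := mul_nonneg kn t1.1; have u2 := mul_nonneg kn t2.1; have u3 := mul_nonneg kn t3.1
    have u4 := mul_nonneg kn t4.1; have u5 := mul_nonneg kn t5.1; have u6 := mul_nonneg kn t6.1
    rw [abs_le]; constructor <;> linarith
  linarith

lemma PP_coord_inj {n a b β γ} (hp : Par n) (ha : a ∈ PP n) (hb : b ∈ PP n) {i0 : Fin 3}
    (hi : a i0 ≠ b i0) (hβ : β ∈ PP n) (hγ : γ ∈ PP n) (h : β i0 = γ i0) : β = γ := by
  have key : ∀ β ∈ PP n, ∀ j, (β j - a j) * (b i0 - a i0) = (β i0 - a i0) * (b j - a j) := by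
    intro β hβ
    have d := det3_zero hp ha hb hβ
    have s1 := ha.1; have s2 := hb.1; have s3 := hβ.1
    have hk : (β 0 - a 0) * (b 1 - a 1) = (β 1 - a 1) * (b 0 - a 0) := by
      have e1 : a 2 = 1 - a 0 - a 1 := by linarith
      have e2 : b 2 = 1 - b 0 - b 1 := by linarith
      have e3 : β 2 = 1 - β 0 - β 1 := by linarith
      simp only [det3, e1, e2, e3] at d
      linarith
    have e1 : a 2 = 1 - a 0 - a 1 := by linarith
    have e2 : b 2 = 1 - b 0 - b 1 := by linarith
    have e3 : β 2 = 1 - β 0 - β 1 := by linarith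
    intro j
    rcases fin3 j with rfl | rfl | rfl <;> rcases fin3 i0 with rfl | rfl | rfl <;>
      (try simp only [e1, e2, e3]) <;> linarith
  ext j
  have h1 := key β hβ j
  have h2 := key γ hγ j
  rw [h] at h1
  have : (β j - a j) = (γ j - a j) := mul_right_cancel₀ (sub_ne_zero.2 (Ne.symm hi)) (h1.trans h2.symm)
  linarith

lemma PP_convex (n) : Convex ℝ (PP n) := by
  intro a ha b hb s t hs ht hst
  refine ⟨?_, fun r i => ?_⟩
  · simp only [Pi.add_apply, Pi.smul_apply, smul_eq_mul]
    linear_combination s * ha.1 + t * hb.1 + hst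
  · rw [map_add, map_smul, map_smul]
    exact add_nonneg (mul_nonneg hs (ha.2 r i)) (mul_nonneg ht (hb.2 r i))

lemma TT_cont (L) (i) : Continuous fun v : V3 => TT L v i :=
  (continuous_apply i).comp (TT L).continuous_of_finiteDimensional

lemma PP_closed (n) : IsClosed (PP n) := by
  have : PP n = {β : V3 | β 0 + β 1 + β 2 = 1} ∩ ⋂ r, ⋂ i, {β | 0 ≤ TT (ns n r) β i} := by
    ext β; simp [PP]
  rw [this]
  refine IsClosed.inter (isClosed_eq (by fun_prop) continuous_const) ?_
  exact isClosed_iInter fun r => isClosed_iInter fun i => isClosed_le continuous_const (TT_cont _ _)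

lemma PP_compact (n) : IsCompact (PP n) := by
  refine IsCompact.of_isClosed_subset (isCompact_univ_pi fun _ : Fin 3 => isCompact_Icc (a := (0:ℝ)) (b := 1))
    (PP_closed n) ?_
  intro β hβ i _
  have h0 : ∀ i, 0 ≤ β i := hβ.2 0
  refine ⟨h0 i, ?_⟩
  have := h0 0; have := h0 1; have := h0 2; have := hβ.1
  rcases fin3 i with rfl | rfl | rfl <;> linarith

lemma PP_seg {n a b} (hp : Par n) (ha : a ∈ PP n) (hb : b ∈ PP n) (hne : a ≠ b) :
    ∃ i0 : Fin 3, ∃ p1 ∈ PP n, ∃ p2 ∈ PP n, p1 i0 < p2 i0 ∧ PP n = segment ℝ p1 p2 ∧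
      (∀ β ∈ PP n, ∀ γ ∈ PP n, β i0 = γ i0 → β = γ) ∧ (∀ β ∈ PP n, p1 i0 ≤ β i0 ∧ β i0 ≤ p2 i0) := by
  obtain ⟨i0, hi⟩ := Function.ne_iff.1 hne
  have inj : ∀ β ∈ PP n, ∀ γ ∈ PP n, β i0 = γ i0 → β = γ :=
    fun β hβ γ hγ h => PP_coord_inj hp ha hb hi hβ hγ h
  have hc : ContinuousOn (fun v : V3 => v i0) (PP n) := (continuous_apply i0).continuousOn
  obtain ⟨p1, h1, m1⟩ := (PP_compact n).exists_isMinOn ⟨a, ha⟩ hc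
  obtain ⟨p2, h2, m2⟩ := (PP_compact n).exists_isMaxOn ⟨a, ha⟩ hc
  have bd : ∀ β ∈ PP n, p1 i0 ≤ β i0 ∧ β i0 ≤ p2 i0 := fun β hβ => ⟨m1 hβ, m2 hβ⟩
  have hlt : p1 i0 < p2 i0 := by
    have := bd a ha; have := bd b hb
    rcases lt_or_gt_of_ne hi with h | h <;> linarith
  refine ⟨i0, p1, h1, p2, h2, hlt, ?_, inj, bd⟩
  apply Set.Subset.antisymm
  · intro β hβ
    have := bd β hβ
    have hd : 0 < p2 i0 - p1 i0 := by linarith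
    set t := (β i0 - p1 i0) / (p2 i0 - p1 i0) with ht
    have t0 : 0 ≤ t := div_nonneg (by linarith) hd.le
    have t1 : t ≤ 1 := by rw [ht, div_le_one hd]; linarith
    have hq : (1 - t) • p1 + t • p2 ∈ segment ℝ p1 p2 := ⟨1 - t, t, by linarith, t0, by ring, rfl⟩
    have hq' := (PP_convex n).segment_subset h1 h2 hq
    have : β = (1 - t) • p1 + t • p2 := inj β hβ _ hq' (by
      simp only [Pi.add_apply, Pi.smul_apply, smul_eq_mul]
      have : t * (p2 i0 - p1 i0) = β i0 - p1 i0 := by rw [ht]; field_simp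
      linarith)
    rw [this]; exact hq
  · exact (PP_convex n).segment_subset h1 h2

end IMX

namespace IMX

lemma shift_cont : Continuous shift := continuous_pi fun i => continuous_apply (i+1)

lemma cyl_nhds (s : Seq3) (N : ℕ) : ∀ᶠ t in 𝓝 s, ∀ i, i < N → t i = s i := by
  have : ∀ i ∈ Finset.range N, ∀ᶠ t in 𝓝 s, t i = s i := fun i _ => by
    have h := (continuous_apply (A := fun _ : ℕ => Fin 3) i).tendsto s
    exact h.eventually (by simp [nhds_discrete (Fin 3)] : ∀ᶠ x in 𝓝 (s i), x = s i)
  have h2 := (Filter.eventually_all_finset _).2 this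
  filter_upwards [h2] with t ht i hi
  exact ht i (Finset.mem_range.2 hi)

lemma tk_congr {s t : Seq3} {N : ℕ} (h : ∀ i, i < N → t i = s i) : tk t N = tk s N := by
  induction N generalizing s t with
  | zero => rfl
  | succ N ih =>
    rw [tk, tk, h 0 (by omega), ih (s := shift s) (t := shift t) fun i hi => h (i+1) (by omega)]

lemma mem_orb (J : Seq3) (k : ℕ) : shift^[k] J ∈ orbitClosure J := subset_closure ⟨k, rfl⟩

lemma orb_shift {J s : Seq3} (h : s ∈ orbitClosure J) : shift s ∈ orbitClosure J := by
  refine map_mem_closure shift_cont h ?_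
  rintro t ⟨r, rfl⟩
  exact ⟨r+1, Function.iterate_succ_apply' _ _ _⟩

lemma orb_shift_iter {J s : Seq3} (h : s ∈ orbitClosure J) (k) : shift^[k] s ∈ orbitClosure J := by
  induction k generalizing s with
  | zero => exact h
  | succ k ih => exact ih (orb_shift h)

lemma orb_approx {J s : Seq3} (h : s ∈ orbitClosure J) (N) :
    ∃ k, ∀ i, i < N → shift^[k] J i = s i := by
  obtain ⟨t, ht, k, rfl⟩ := mem_closure_iff_nhds.1 h _ (cyl_nhds s N)
  exact ⟨k, ht⟩

lemma orb_closed (J) : IsClosed (orbitClosure J) := isClosed_closure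

lemma prefix_flat {f : Fin 3 → List (Fin 3)} {K : ℕ} (hf : ∀ a, (f a).length ≤ K) (l w v : List (Fin 3))
    (h : w ++ v = l.flatMap f) : ∃ z q : List (Fin 3), w = z.flatMap f ++ q ∧ q.length ≤ K := by
  induction l generalizing w v with
  | nil =>
    refine ⟨[], [], ?_, by simp⟩
    simp at h; simp [h.1]
  | cons a l ih =>
    rw [List.flatMap_cons, List.append_eq_append_iff] at h
    rcases h with ⟨c, h1, h2⟩ | ⟨c, h1, h2⟩
    · refine ⟨[], w, by simp, ?_⟩
      have := hf a; rw [h1, List.length_append] at this; omega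
    · obtain ⟨z, q, hz, hq⟩ := ih c v h2.symm
      exact ⟨a :: z, q, by rw [h1, hz]; simp, hq⟩

lemma infix_flat {f : Fin 3 → List (Fin 3)} {K : ℕ} (hf : ∀ a, (f a).length ≤ K) (l u w v : List (Fin 3))
    (h : u ++ (w ++ v) = l.flatMap f) :
    ∃ p z q : List (Fin 3), w = p ++ (z.flatMap f ++ q) ∧ p.length ≤ K ∧ q.length ≤ K := by
  induction l generalizing u with
  | nil =>
    refine ⟨[], [], [], ?_, by simp, by simp⟩
    simp at h; simp [h.2.1]
  | cons a l ih =>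
    rw [List.flatMap_cons, List.append_eq_append_iff] at h
    rcases h with ⟨c, h1, h2⟩ | ⟨c, h1, h2⟩
    · have hc : c.length ≤ K := by
        have := hf a; rw [h1, List.length_append] at this; omega
      rw [List.append_eq_append_iff] at h2
      rcases h2 with ⟨d, h3, h4⟩ | ⟨d, h3, h4⟩
      · refine ⟨w, [], [], by simp, ?_, by simp⟩
        rw [h3, List.length_append] at hc; omega
      · obtain ⟨z, q, hz, hq⟩ := prefix_flat hf l d v h4.symm
        exact ⟨c, z, q, by rw [h3, hz], hc, hq⟩
    · exact ih c h2.symm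

def KK (n : ℕ → ℕ) (r : ℕ) : ℕ := ell n r 0 + ell n r 1 + ell n r 2

lemma factor {n J} (hJ : ∀ r, pre J (Bk (ns n r) 2)) (hp : Par n) {s} (hs : s ∈ orbitClosure J)
    (N r) : ∃ p z q, tk s N = p ++ (Fl (ns n r) z ++ q) ∧ p.length ≤ KK n r ∧ q.length ≤ KK n r := by
  obtain ⟨k, hk⟩ := orb_approx hs N
  obtain ⟨R, hR⟩ := ell_large hp (k+N)
  have h1 := hJ (r+R)
  have h2 : k + N ≤ (Bk (ns n (r+R)) 2).length := hR _ (by omega) 2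
  obtain ⟨d, hd⟩ := Nat.exists_eq_add_of_le h2
  rw [pre_iff_tk, hd, tk_add, tk_add, tk_congr hk, List.append_assoc, ns_add, ← Fl_single, Fl_append] at h1
  refine infix_flat ?_ _ _ _ _ h1
  intro a
  rcases fin3 a with rfl | rfl | rfl <;> simp only [KK, ell] <;> omega

lemma lin_cnt_bdd (L : V3 →ₗ[ℝ] ℝ) : ∃ M : ℝ, 0 ≤ M ∧ ∀ l, |L (cnt l)| ≤ M * l.length := by
  refine ⟨|L (ee 0)| + |L (ee 1)| + |L (ee 2)|, by positivity, fun l => ?_⟩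
  induction l with
  | nil => simp [cnt]
  | cons a l ih =>
    rw [cnt, map_add, List.length_cons]
    push_cast
    have := abs_add_le (L (ee a)) (L (cnt l))
    have h0 := abs_nonneg (L (ee 0)); have h1 := abs_nonneg (L (ee 1)); have h2 := abs_nonneg (L (ee 2))
    rcases fin3 a with rfl | rfl | rfl <;> linarith

noncomputable def TTc (L : List ℕ) (i : Fin 3) : V3 →ₗ[ℝ] ℝ := (LinearMap.proj i).comp (TT L)

lemma TTc_apply (L i v) : TTc L i v = TT L v i := rfl

lemma TT_birk_ge {n J} (hJ : ∀ r, pre J (Bk (ns n r) 2)) (hp : Par n) (r i) :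
    ∃ C : ℝ, ∀ s ∈ orbitClosure J, ∀ N, -C ≤ TT (ns n r) (birk s N) i := by
  obtain ⟨M, hM0, hM⟩ := lin_cnt_bdd (TTc (ns n r) i)
  refine ⟨M * KK n r + M * KK n r, fun s hs N => ?_⟩
  obtain ⟨p, z, q, h, h1, h2⟩ := factor hJ hp hs N r
  rw [birk_tk, h, cnt_append, cnt_append, map_add, map_add, TT_cnt_Fl]
  have a1 := abs_le.1 (hM p)
  have a2 := abs_le.1 (hM q)
  rw [TTc_apply] at a1 a2
  have b1 : M * p.length ≤ M * KK n r := mul_le_mul_of_nonneg_left (by exact_mod_cast h1) hM0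
  have b2 : M * q.length ≤ M * KK n r := mul_le_mul_of_nonneg_left (by exact_mod_cast h2) hM0
  have := cnt_nonneg z i
  simp only [Pi.add_apply]
  linarith

lemma DF_sub {n J} (hJ : ∀ r, pre J (Bk (ns n r) 2)) (hp : Par n) : DFMZ (orbitClosure J) ⊆ PP n := by
  rintro v ⟨s, N, hs, hN, hv⟩
  have hlin : ∀ L : V3 →ₗ[ℝ] ℝ, Tendsto (fun i => (N i : ℝ)⁻¹ * L (birk (s i) (N i))) atTop (𝓝 (L v)) := by
    intro L
    have := (L.continuous_of_finiteDimensional.tendsto v).comp hv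
    simpa [Function.comp_def] using this
  have hN' : Tendsto (fun i => (N i : ℝ)) atTop atTop := tendsto_natCast_atTop_atTop.comp hN
  constructor
  · have h := hlin ((LinearMap.proj 0 : V3 →ₗ[ℝ] ℝ) + LinearMap.proj 1 + LinearMap.proj 2)
    simp only [LinearMap.add_apply, LinearMap.proj_apply, birk_sum] at h
    refine tendsto_nhds_unique h ?_
    refine tendsto_const_nhds.congr' ?_
    filter_upwards [hN'.eventually_gt_atTop 0] with i hi
    rw [inv_mul_cancel₀ hi.ne']
  · intro r i
    obtain ⟨C, hC⟩ := TT_birk_ge hJ hp r i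
    have h := hlin (TTc (ns n r) i)
    simp only [TTc_apply] at h
    have h2 : Tendsto (fun i => (N i : ℝ)⁻¹ * (-C)) atTop (𝓝 0) := by
      simpa using (tendsto_inv_atTop_zero.comp hN').mul_const (-C)
    refine le_of_tendsto_of_tendsto' h2 h fun j => ?_
    exact mul_le_mul_of_nonneg_left (hC _ (hs j) _) (by positivity)

lemma subseq {J} (s : ℕ → Seq3) (N : ℕ → ℕ) (hs : ∀ i, s i ∈ orbitClosure J) (hN : Tendsto N atTop atTop) :
    ∃ v ∈ DFMZ (orbitClosure J), ∃ φ : ℕ → ℕ, StrictMono φ ∧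
      Tendsto (fun i => (N (φ i) : ℝ)⁻¹ • birk (s (φ i)) (N (φ i))) atTop (𝓝 v) := by
  have hbox : ∀ i, (N i : ℝ)⁻¹ • birk (s i) (N i) ∈ Set.pi Set.univ (fun _ : Fin 3 => Set.Icc (0:ℝ) 1) := by
    intro i j _
    simp only [Pi.smul_apply, smul_eq_mul]
    have h0 := birk_nonneg (s i) (N i) j
    have h1 := birk_le (s i) (N i) j
    refine ⟨by positivity, ?_⟩
    calc (N i : ℝ)⁻¹ * birk (s i) (N i) j ≤ (N i : ℝ)⁻¹ * N i := mul_le_mul_of_nonneg_left h1 (by positivity)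
      _ ≤ 1 := inv_mul_le_one
  obtain ⟨v, -, φ, hφ, hv⟩ := (isCompact_univ_pi fun _ : Fin 3 => isCompact_Icc (a := (0:ℝ)) (b := 1)).tendsto_subseq hbox
  exact ⟨v, ⟨fun i => s (φ i), fun i => N (φ i), fun i => hs _, hN.comp hφ.tendsto_atTop, hv⟩, φ, hφ, hv⟩

lemma birk_cont (N : ℕ) (s : Seq3) : ∀ᶠ t in 𝓝 s, birk t N = birk s N := by
  filter_upwards [cyl_nhds s N] with t ht
  rw [birk_tk, birk_tk, tk_congr ht]

lemma maxpt {J} (L : V3 →ₗ[ℝ] ℝ) {p : V3} (hpD : p ∈ DFMZ (orbitClosure J)) :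
    ∃ s ∈ orbitClosure J, ∀ N : ℕ, N * L p ≤ L (birk s N) := by
  by_contra hc
  push Not at hc
  set X := orbitClosure J
  set θ := L p
  let U : ℕ → Set Seq3 := fun m => {s | ∃ N, 1 ≤ N ∧ N ≤ m ∧ L (birk s N) + 1/(m+1) < N * θ}
  have hUo : ∀ m, IsOpen (U m) := by
    intro m
    rw [isOpen_iff_mem_nhds]
    rintro s ⟨N, h1, h2, h3⟩
    filter_upwards [birk_cont N s] with t ht
    exact ⟨N, h1, h2, by rw [ht]; exact h3⟩
  have hUm : Monotone U := by
    intro m m' hm s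
    rintro ⟨N, h1, h2, h3⟩
    refine ⟨N, h1, h2.trans hm, lt_of_le_of_lt ?_ h3⟩
    have : (1:ℝ) / (m'+1) ≤ 1/(m+1) := by
      apply one_div_le_one_div_of_le (by positivity)
      have : (m:ℝ) ≤ m' := by exact_mod_cast hm
      linarith
    linarith
  have hcov : X ⊆ ⋃ m, U m := by
    intro s hs
    obtain ⟨N, hN⟩ := hc s hs
    have hN1 : 1 ≤ N := by
      rcases Nat.eq_zero_or_pos N with rfl | h
      · simp [birk_zero] at hN
      · exact h
    obtain ⟨k, hk⟩ := exists_nat_one_div_lt (sub_pos.2 hN)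
    rw [Set.mem_iUnion]
    refine ⟨max k N, N, hN1, le_max_right _ _, ?_⟩
    have : (1:ℝ) / ((max k N : ℕ)+1) ≤ 1/(k+1) := by
      apply one_div_le_one_div_of_le (by positivity)
      have : (k:ℝ) ≤ (max k N : ℕ) := by exact_mod_cast le_max_left k N
      linarith
    linarith
  obtain ⟨m, hm⟩ := (orb_closed J).isCompact.elim_directed_cover U hUo hcov hUm.directed_le
  set δ : ℝ := 1/(m+1)
  have hδ : 0 < δ := by positivity
  obtain ⟨M, hM0, hM⟩ := lin_cnt_bdd L
  have hmp : 1 ≤ m := by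
    obtain ⟨N, h1, h2, -⟩ := hm (mem_orb J 0)
    omega
  have hmp' : (0:ℝ) < m := by exact_mod_cast hmp
  set C : ℝ := m * (M + |θ - δ/m|)
  have key : ∀ K : ℕ, ∀ s ∈ X, L (birk s K) ≤ K * (θ - δ/m) + C := by
    intro K
    induction K using Nat.strong_induction_on with
    | _ K ih =>
      intro s hs
      by_cases hK : K < m
      · have h1 := (abs_le.1 (hM (tk s K))).2
        rw [← birk_tk, tk_length] at h1
        have hKm : (K:ℝ) ≤ m := by exact_mod_cast hK.le
        have hK0 : (0:ℝ) ≤ K := by positivity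
        have h2 := neg_abs_le (θ - δ/m)
        have h3 := abs_nonneg (θ - δ/m)
        have h4 : (K:ℝ) * |θ - δ/m| ≤ m * |θ - δ/m| := mul_le_mul_of_nonneg_right hKm h3
        have h5 : (K:ℝ) * (-|θ - δ/m|) ≤ K * (θ - δ/m) := mul_le_mul_of_nonneg_left h2 hK0
        have h6 : M * K ≤ M * m := mul_le_mul_of_nonneg_left hKm hM0
        simp only [C]
        linarith
      · obtain ⟨N, h1, h2, h3⟩ := hm hs
        obtain ⟨d, hd⟩ := Nat.exists_eq_add_of_le (show N ≤ K by omega)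
        have h4 := ih d (by omega) _ (orb_shift_iter hs N)
        rw [hd, birk_add, map_add]
        push_cast
        have h5 : (N:ℝ) * (δ/m) ≤ δ := by
          have : (N:ℝ) ≤ m := by exact_mod_cast h2
          calc (N:ℝ) * (δ/m) ≤ m * (δ/m) := mul_le_mul_of_nonneg_right this (by positivity)
            _ = δ := by field_simp
        have h3' : L (birk s N) + δ < N * θ := h3
        linarith
  obtain ⟨s, N, hs, hN, hv⟩ := hpD
  have hN' : Tendsto (fun i => (N i : ℝ)) atTop atTop := tendsto_natCast_atTop_atTop.comp hN
  have h1 : Tendsto (fun i => (N i : ℝ)⁻¹ * L (birk (s i) (N i))) atTop (𝓝 θ) := by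
    have := (L.continuous_of_finiteDimensional.tendsto p).comp hv
    simpa [Function.comp_def] using this
  have h2 : Tendsto (fun i => (θ - δ/m) + (N i : ℝ)⁻¹ * C) atTop (𝓝 ((θ - δ/m) + 0 * C)) :=
    tendsto_const_nhds.add ((tendsto_inv_atTop_zero.comp hN').mul_const C)
  have h3 := le_of_tendsto_of_tendsto h1 h2 (by
    filter_upwards [hN'.eventually_gt_atTop 0] with i hi
    have := mul_le_mul_of_nonneg_left (key (N i) (s i) (hs i)) (inv_pos.2 hi).le
    refine this.trans (le_of_eq ?_)
    field_simp)
  have : 0 < δ / m := by positivity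
  linarith

lemma freq_of_max {n J} (hJ : ∀ r, pre J (Bk (ns n r) 2)) (hp : Par n) (L : V3 →ₗ[ℝ] ℝ) {p : V3}
    (huniq : ∀ β ∈ PP n, L p ≤ L β → β = p) {s} (hs : s ∈ orbitClosure J)
    (h : ∀ N : ℕ, N * L p ≤ L (birk s N)) : hasFreq s p := by
  refine tendsto_of_subseq_tendsto fun N hN => ?_
  obtain ⟨v, hv, φ, hφ, ht⟩ := subseq (fun _ => s) N (fun _ => hs) hN
  refine ⟨φ, ?_⟩
  have hvp : v = p := by
    refine huniq v (DF_sub hJ hp hv) ?_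
    have h1 := (L.continuous_of_finiteDimensional.tendsto v).comp ht
    refine ge_of_tendsto h1 ?_
    have hN' : Tendsto (fun i => (N (φ i) : ℝ)) atTop atTop :=
      tendsto_natCast_atTop_atTop.comp (hN.comp hφ.tendsto_atTop)
    filter_upwards [hN'.eventually_gt_atTop 0] with i hi
    simp only [Function.comp, map_smul, smul_eq_mul]
    rw [le_inv_mul_iff₀ hi]
    exact h _
  rw [← hvp]; exact ht

lemma ext_mem {n α J} (hα : α ∈ PP n) (hI : IsInfimax α J) (hp : Par n) (L : V3 →ₗ[ℝ] ℝ)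
    {p : V3} (hpP : p ∈ PP n) (huniq : ∀ β ∈ PP n, L p ≤ L β → β = p) :
    p ∈ DFMZ (orbitClosure J) := by
  have hJ := infimax_pre hα hI
  have h1 : ∀ r, ∃ i k, pre (shift^[k] J) (Bk (ns n r) i) ∧
      (ell n r i : ℝ) * L p ≤ L (cnt (Bk (ns n r) i)) := by
    intro r
    by_contra hc
    push Not at hc
    have hlt : ∀ i, L (cnt (Bk (ns n r) i)) < (ell n r i : ℝ) * L p := by
      intro i
      obtain ⟨k, hk⟩ := blk_occurs hα hI hp r i
      exact hc i k hk
    have e := congrArg L (recon (ns n r) p)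
    rw [map_sum, Fin.sum_univ_three] at e
    simp only [map_smul, smul_eq_mul] at e
    have es := recon_sum (ns n r) p
    rw [hpP.1] at es
    have q0 := mul_le_mul_of_nonneg_left (hlt 0).le (hpP.2 r 0)
    have q1 := mul_le_mul_of_nonneg_left (hlt 1).le (hpP.2 r 1)
    have q2 := mul_lt_mul_of_pos_left (hlt 2) (third_pos hpP r)
    simp only [ell] at q0 q1 q2
    have : L p = L p * 1 := by ring
    rw [es] at this
    nlinarith
  choose i k h2 h3 using h1
  have hN : Tendsto (fun r => ell n r (i r)) atTop atTop := by
    rw [tendsto_atTop]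
    intro b
    obtain ⟨R, hR⟩ := ell_large hp b
    filter_upwards [eventually_ge_atTop R] with r hr
    exact hR r hr _
  obtain ⟨v, hv, φ, hφ, ht⟩ := subseq (fun r => shift^[k r] J) _ (fun r => mem_orb J _) hN
  have hvp : v = p := by
    refine huniq v (DF_sub hJ hp hv) ?_
    have h1 := (L.continuous_of_finiteDimensional.tendsto v).comp ht
    refine ge_of_tendsto' h1 fun r => ?_
    have hpos : (0:ℝ) < ell n (φ r) (i (φ r)) := by exact_mod_cast ell_pos _ _ _
    simp only [Function.comp, map_smul, smul_eq_mul]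
    rw [le_inv_mul_iff₀ hpos, birk_tk]
    have := pre_iff_tk.1 (h2 (φ r))
    rw [ell, this]
    exact h3 (φ r)
  rw [← hvp]; exact hv

/-- discrete intermediate values -/
lemma divt (g : ℕ → ℝ) (hg : ∀ k, |g (k+1) - g k| ≤ 1) (a b : ℕ) (c : ℝ) (ha : g a ≤ c) (hb : c ≤ g b) :
    ∃ k, |g k - c| ≤ 1 := by
  by_contra hc
  push Not at hc
  have up : ∀ k, (g k ≤ c ↔ g (k+1) ≤ c) := by
    intro k
    have h1 := abs_le.1 (hg k)
    have h2 := hc k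
    have h3 := hc (k+1)
    rw [lt_abs] at h2 h3
    constructor <;> intro h <;> by_contra h' <;> push Not at h' <;>
      rcases h2 with h2 | h2 <;> rcases h3 with h3 | h3 <;> linarith
  have all : ∀ k, (g 0 ≤ c ↔ g k ≤ c) := by
    intro k
    induction k with
    | zero => rfl
    | succ k ih => rw [ih, up]
  have h1 : g b ≤ c := (all b).1 ((all a).2 ha)
  have := hc b
  rw [le_antisymm h1 hb] at this
  simp at this
  linarith

lemma DF_eq {n α J} (hα : α ∈ PP n) (hI : IsInfimax α J) (hp : Par n) {i0 : Fin 3} {p1 p2 : V3}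
    (h1 : p1 ∈ PP n) (h2 : p2 ∈ PP n)
    (inj : ∀ β ∈ PP n, ∀ γ ∈ PP n, β i0 = γ i0 → β = γ)
    (bd : ∀ β ∈ PP n, p1 i0 ≤ β i0 ∧ β i0 ≤ p2 i0) :
    DFMZ (orbitClosure J) = PP n ∧ (∃ s ∈ orbitClosure J, hasFreq s p1) ∧
      (∃ s ∈ orbitClosure J, hasFreq s p2) := by
  have hJ := infimax_pre hα hI
  let L2 : V3 →ₗ[ℝ] ℝ := LinearMap.proj i0
  let L1 : V3 →ₗ[ℝ] ℝ := - LinearMap.proj i0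
  have u1 : ∀ β ∈ PP n, L1 p1 ≤ L1 β → β = p1 := fun β hβ h => inj β hβ p1 h1 (by
    have h' : - p1 i0 ≤ - β i0 := h
    linarith [(bd β hβ).1])
  have u2 : ∀ β ∈ PP n, L2 p2 ≤ L2 β → β = p2 := fun β hβ h => inj β hβ p2 h2 (by
    have h' : p2 i0 ≤ β i0 := h
    linarith [(bd β hβ).2])
  obtain ⟨s1, hs1, m1⟩ := maxpt L1 (ext_mem hα hI hp L1 h1 u1)
  obtain ⟨s2, hs2, m2⟩ := maxpt L2 (ext_mem hα hI hp L2 h2 u2)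
  refine ⟨Set.Subset.antisymm (DF_sub hJ hp) ?_, ⟨s1, hs1, freq_of_max hJ hp L1 u1 hs1 m1⟩,
    ⟨s2, hs2, freq_of_max hJ hp L2 u2 hs2 m2⟩⟩
  intro β hβ
  have hw : ∀ N : ℕ, ∃ k, |birk (shift^[k] J) N i0 - N * β i0| ≤ 1 := by
    intro N
    obtain ⟨a, ha⟩ := orb_approx hs1 N
    obtain ⟨b, hb⟩ := orb_approx hs2 N
    have hN : (0:ℝ) ≤ N := by positivity
    refine divt (fun k => birk (shift^[k] J) N i0) ?_ a b _ ?_ ?_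
    · intro k
      have e1 := birk_succ (shift^[k] J) N
      have e2 := birk_succ' (shift^[k] J) N
      rw [← Function.iterate_succ_apply' (f := shift)] at e1
      have e3 := congrFun (e1.symm.trans e2) i0
      simp only [Pi.add_apply, kappa_eq, ee] at e3
      rw [abs_le]
      split_ifs at e3 <;> constructor <;> linarith
    · have := m1 N
      rw [birk_tk, tk_congr ha, ← birk_tk]
      have h' : N * - p1 i0 ≤ - birk s1 N i0 := this
      have := mul_le_mul_of_nonneg_left (bd β hβ).1 hN
      linarith
    · have := m2 N
      rw [birk_tk, tk_congr hb, ← birk_tk]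
      have h' : N * p2 i0 ≤ birk s2 N i0 := this
      have := mul_le_mul_of_nonneg_left (bd β hβ).2 hN
      linarith
  choose k hk using hw
  obtain ⟨v, hv, φ, hφ, ht⟩ := subseq (fun N => shift^[k N] J) id (fun r => mem_orb J _) tendsto_id
  have hvp : v = β := by
    refine inj v (DF_sub hJ hp hv) β hβ ?_
    have t1 := (tendsto_pi_nhds.1 ht) i0
    have hN' : Tendsto (fun i => (φ i : ℝ)) atTop atTop :=
      tendsto_natCast_atTop_atTop.comp hφ.tendsto_atTop
    have t2 : Tendsto (fun i => (φ i : ℝ)⁻¹) atTop (𝓝 0) := tendsto_inv_atTop_zero.comp hN'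
    have t3 := t1.sub_const (β i0)
    have t4 : Tendsto (fun i => (((id (φ i) : ℕ) : ℝ)⁻¹ • birk (shift^[k (φ i)] J) (id (φ i))) i0 - β i0) atTop (𝓝 0) := by
      refine squeeze_zero_norm' ?_ t2
      filter_upwards [hN'.eventually_gt_atTop 0] with i hi
      have := hk (φ i)
      simp only [id, Pi.smul_apply, smul_eq_mul, Real.norm_eq_abs]
      have e : (φ i : ℝ)⁻¹ * birk (shift^[k (φ i)] J) (φ i) i0 - β i0 =
        (φ i : ℝ)⁻¹ * (birk (shift^[k (φ i)] J) (φ i) i0 - φ i * β i0) := by field_simp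
      rw [e, abs_mul, abs_of_pos (inv_pos.2 hi)]
      exact mul_le_of_le_one_right (inv_pos.2 hi).le this
    have := tendsto_nhds_unique t3 t4
    linarith
  rw [← hvp]; exact hv

end IMX

namespace IMX

def Loc (m : ℕ) (A : Set Seq3) : Prop := ∀ s t : Seq3, (∀ i, i < m → s i = t i) → (s ∈ A ↔ t ∈ A)

open Classical in
noncomputable def chi (A : Set Seq3) (s : Seq3) : ℝ := if s ∈ A then 1 else 0

lemma chi_nonneg (A s) : 0 ≤ chi A s := by unfold chi; split_ifs <;> norm_num
lemma chi_le (A s) : chi A s ≤ 1 := by unfold chi; split_ifs <;> norm_num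

noncomputable def GG (A : Set Seq3) (s : Seq3) (N : ℕ) : ℝ := ∑ i ∈ Finset.range N, chi A (shift^[i] s)

lemma GG_nonneg (A s N) : 0 ≤ GG A s N := Finset.sum_nonneg fun _ _ => chi_nonneg _ _
lemma GG_le (A s N) : GG A s N ≤ N := by
  have := Finset.sum_le_sum (s := Finset.range N) fun i _ => chi_le A (shift^[i] s)
  simpa [GG] using this

lemma GG_add (A s M N) : GG A s (M+N) = GG A s M + GG A (shift^[M] s) N := by
  rw [GG, Finset.sum_range_add]
  congr 1
  refine Finset.sum_congr rfl fun i _ => ?_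
  rw [add_comm, Function.iterate_add_apply]

lemma chi_loc {m A} (hA : Loc m A) {s t : Seq3} (h : ∀ i, i < m → s i = t i) : chi A s = chi A t := by
  unfold chi; rw [hA s t h]

lemma GG_loc {m A} (hA : Loc m A) {s t : Seq3} {N} (h : ∀ i, i < N → s i = t i) :
    |GG A s N - GG A t N| ≤ m := by
  by_cases hN : N ≤ m
  · have := GG_nonneg A s N; have := GG_nonneg A t N
    have := GG_le A s N; have := GG_le A t N
    have : (N:ℝ) ≤ m := by exact_mod_cast hN
    rw [abs_le]; constructor <;> linarith
  · obtain ⟨K, rfl⟩ := Nat.exists_eq_add_of_le' (not_le.1 hN).le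
    rw [GG_add, GG_add]
    have e : GG A s K = GG A t K := by
      refine Finset.sum_congr rfl fun i hi => chi_loc hA fun j hj => ?_
      rw [Finset.mem_range] at hi
      rw [shift_iter, shift_iter]; exact h _ (by omega)
    have := GG_nonneg A (shift^[K] s) m; have := GG_nonneg A (shift^[K] t) m
    have := GG_le A (shift^[K] s) m; have := GG_le A (shift^[K] t) m
    rw [abs_le]; constructor <;> linarith

noncomputable def gg (A : Set Seq3) (l : List (Fin 3)) : ℝ := GG A (ext l) l.length

lemma GG_pre {m A} (hA : Loc m A) {s l} (h : pre s l) : |GG A s l.length - gg A l| ≤ m :=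
  GG_loc hA fun i hi => getD_of_pre h i hi

noncomputable def Lam (A : Set Seq3) (L : List ℕ) : V3 →ₗ[ℝ] ℝ := ∑ i, gg A (Bk L i) • TTc L i

lemma Lam_Fl (A L z) : Lam A L (cnt (Fl L z)) = ∑ i, gg A (Bk L i) * cnt z i := by
  simp [Lam, TTc_apply, TT_cnt_Fl]

lemma GG_Fl {m A} (hA : Loc m A) (L z) : ∀ s, pre s (Fl L z) →
    |GG A s (Fl L z).length - Lam A L (cnt (Fl L z))| ≤ m * z.length := by
  induction z with
  | nil => intro s _; simp [Fl_nil', GG, cnt]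
  | cons a z ih =>
    intro s hs
    rw [Fl_cons', pre_append] at hs
    have h1 := GG_pre hA hs.1
    have h2 := ih _ hs.2
    have e : Lam A L (cnt (Fl L (a :: z))) = gg A (Bk L a) + Lam A L (cnt (Fl L z)) := by
      rw [Lam_Fl, Lam_Fl, cnt]
      simp only [Pi.add_apply, mul_add, Finset.sum_add_distrib, ee]
      simp
    rw [e, Fl_cons', List.length_append, GG_add, List.length_cons]
    push_cast
    rw [abs_le] at *
    constructor <;> linarith

lemma Fl_len {L : List ℕ} {k : ℕ} (h : ∀ i, k ≤ (Bk L i).length) (z) : k * z.length ≤ (Fl L z).length := by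
  induction z with
  | nil => simp
  | cons a z ih =>
    rw [Fl_cons', List.length_append, List.length_cons]
    have := h a
    linarith

lemma core {n J} (hJ : ∀ r, pre J (Bk (ns n r) 2)) (hp : Par n) {m A} (hA : Loc m A) (k : ℕ) (hk : 0 < k) :
    ∃ (L : V3 →ₗ[ℝ] ℝ) (C : ℝ), ∀ s ∈ orbitClosure J, ∀ N : ℕ,
      |GG A s N - L (birk s N)| ≤ C + (m/k : ℝ) * N := by
  obtain ⟨r, hr⟩ := ell_large hp k
  replace hr := hr r le_rfl
  obtain ⟨M, hM0, hM⟩ := lin_cnt_bdd (Lam A (ns n r))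
  refine ⟨Lam A (ns n r), (M+1) * KK n r + (M+1) * KK n r, fun s hs N => ?_⟩
  obtain ⟨p, z, q, h, h1, h2⟩ := factor hJ hp hs N r
  have hl := congrArg List.length h
  rw [tk_length, List.length_append, List.length_append] at hl
  have hpre : pre s (p ++ (Fl (ns n r) z ++ q)) := by
    rw [pre_iff_tk, ← h, tk_length]
  rw [pre_append, pre_append] at hpre
  have hz := GG_Fl hA (ns n r) z _ hpre.2.1
  have hzl : k * z.length ≤ N := by
    have := Fl_len (L := ns n r) hr z
    omega
  rw [birk_tk, h, cnt_append, cnt_append, map_add, map_add, hl, GG_add, GG_add]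
  have a1 := hM p
  have a2 := hM q
  have h1' : (p.length : ℝ) ≤ KK n r := by exact_mod_cast h1
  have h2' : (q.length : ℝ) ≤ KK n r := by exact_mod_cast h2
  have b1 : M * p.length ≤ M * KK n r := mul_le_mul_of_nonneg_left h1' hM0
  have b2 : M * q.length ≤ M * KK n r := mul_le_mul_of_nonneg_left h2' hM0
  have c1 := GG_nonneg A s p.length
  have c2 := GG_le A s p.length
  have c3 := GG_nonneg A (shift^[(Fl (ns n r) z).length] (shift^[p.length] s)) q.length
  have c4 := GG_le A (shift^[(Fl (ns n r) z).length] (shift^[p.length] s)) q.length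
  have hkr : (0:ℝ) < k := by exact_mod_cast hk
  have d : (m:ℝ) * z.length ≤ (m/k : ℝ) * N := by
    rw [div_mul_eq_mul_div, le_div_iff₀ hkr, mul_assoc]
    refine mul_le_mul_of_nonneg_left ?_ (by positivity)
    rw [mul_comm]; exact_mod_cast hzl
  rw [← hl]
  rw [abs_le] at *
  constructor <;> linarith

structure Inv (X : Set Seq3) (μ : Measure Seq3) : Prop where
  prob : IsProbabilityMeasure μ
  mp : MeasurePreserving shift μ μ
  supp : μ X = 1

lemma cint {μ : Measure Seq3} [IsFiniteMeasure μ] {f : Seq3 → ℝ} (hf : Continuous f) : Integrable f μ :=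
  (BoundedContinuousFunction.mkOfCompact ⟨f, hf⟩).integrable μ

lemma shift_iter_cont (i : ℕ) : Continuous shift^[i] := shift_cont.iterate i

lemma Inv.ae {X μ} (h : Inv X μ) (hX : IsClosed X) : ∀ᵐ s ∂μ, s ∈ X := by
  have := h.prob
  exact (prob_compl_eq_zero_iff hX.measurableSet).2 h.supp

lemma int_lower {X μ} (h : Inv X μ) (hX : IsClosed X) {f : Seq3 → ℝ} (hf : Continuous f) {C c : ℝ}
    (hb : ∀ s ∈ X, ∀ N : ℕ, -C - c * N ≤ ∑ i ∈ Finset.range N, f (shift^[i] s)) : -c ≤ ∫ s, f s ∂μ := by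
  have := h.prob
  have h1 : ∀ N : ℕ, -C - c * N ≤ N * ∫ s, f s ∂μ := by
    intro N
    have e : ∫ s, ∑ i ∈ Finset.range N, f (shift^[i] s) ∂μ = N * ∫ s, f s ∂μ := by
      rw [integral_finsetSum (f := fun i s => f (shift^[i] s)) _ fun i _ => cint (hf.comp (shift_iter_cont i))]
      have : ∀ i, ∫ s, f (shift^[i] s) ∂μ = ∫ s, f s ∂μ := by
        intro i
        have hm := h.mp.iterate i
        conv_rhs => rw [← hm.map_eq]
        rw [integral_map hm.measurable.aemeasurable hf.aestronglyMeasurable]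
      simp [this]
    rw [← e]
    have e2 : ∫ _ : Seq3, (-C - c * N) ∂μ = -C - c * N := by simp
    rw [← e2]
    refine integral_mono_ae (integrable_const _)
      (cint (continuous_finsetSum _ fun i _ => hf.comp (shift_iter_cont i))) ?_
    filter_upwards [h.ae hX] with s hs
    exact hb s hs N
  by_contra hc
  push Not at hc
  obtain ⟨N, hN⟩ := exists_nat_gt (C / (-c - ∫ s, f s ∂μ))
  rw [div_lt_iff₀ (by linarith)] at hN
  have := h1 N
  linarith

lemma kappa_cont : Continuous kappa :=
  (continuous_of_discreteTopology (f := ee)).comp (continuous_apply 0)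

lemma lin_int {μ : Measure Seq3} [IsFiniteMeasure μ] (L : V3 →ₗ[ℝ] ℝ) :
    ∫ s, L (kappa s) ∂μ = L (∫ s, kappa s ∂μ) :=
  (LinearMap.toContinuousLinearMap L).integral_comp_comm (by
    exact (BoundedContinuousFunction.mkOfCompact ⟨kappa, kappa_cont⟩).integrable μ)

lemma lin_birk (L : V3 →ₗ[ℝ] ℝ) (s N) : L (birk s N) = ∑ i ∈ Finset.range N, L (kappa (shift^[i] s)) := by
  rw [birk, map_sum]

lemma lin_cont (L : V3 →ₗ[ℝ] ℝ) : Continuous fun s => L (kappa s) :=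
  L.continuous_of_finiteDimensional.comp kappa_cont

lemma rot_mem {n J} (hJ : ∀ r, pre J (Bk (ns n r) 2)) (hp : Par n) {μ} (h : Inv (orbitClosure J) μ) :
    (∫ s, kappa s ∂μ) ∈ PP n := by
  have := h.prob
  constructor
  · have e := lin_int (μ := μ) ((LinearMap.proj 0 : V3 →ₗ[ℝ] ℝ) + LinearMap.proj 1 + LinearMap.proj 2)
    simp only [LinearMap.add_apply, LinearMap.proj_apply] at e
    rw [← e]
    have : ∀ s, kappa s 0 + kappa s 1 + kappa s 2 = 1 := by
      intro s
      rw [kappa_eq]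
      rcases fin3 (s 0) with h | h | h <;> simp [h, ee]
    simp [this]
  · intro r i
    obtain ⟨C, hC⟩ := TT_birk_ge hJ hp r i
    have e := lin_int (μ := μ) (TTc (ns n r) i)
    rw [TTc_apply] at e
    rw [← e]
    have := int_lower (c := 0) (C := C) h (orb_closed J) (lin_cont (TTc (ns n r) i)) (by
      intro s hs N
      rw [← lin_birk, TTc_apply]
      have := hC s hs N
      linarith)
    linarith

lemma chi_cont {m A} (hA : Loc m A) : Continuous (chi A) := by
  rw [continuous_iff_continuousAt]
  intro s
  refine tendsto_const_nhds.congr' ?_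
  filter_upwards [cyl_nhds s m] with t ht
  exact (chi_loc hA ht).symm

lemma loc_open {m A} (hA : Loc m A) : IsOpen A := by
  rw [isOpen_iff_mem_nhds]
  intro s hs
  filter_upwards [cyl_nhds s m] with t ht
  exact (hA t s ht).2 hs

lemma chi_int {m A} (hA : Loc m A) (μ : Measure Seq3) : ∫ s, chi A s ∂μ = μ.real A := by
  rw [← integral_indicator_one (loc_open hA).measurableSet]
  refine integral_congr_ae (.of_forall fun s => ?_)
  simp [chi, Set.indicator]

lemma core_int {n J} (hJ : ∀ r, pre J (Bk (ns n r) 2)) (hp : Par n) {m A} (hA : Loc m A) (k : ℕ) (hk : 0 < k) :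
    ∃ (L : V3 →ₗ[ℝ] ℝ), ∀ μ, Inv (orbitClosure J) μ → |μ.real A - L (∫ s, kappa s ∂μ)| ≤ m/k := by
  obtain ⟨L, C, h⟩ := core hJ hp hA k hk
  refine ⟨L, fun μ hμ => ?_⟩
  have := hμ.prob
  rw [← chi_int hA, ← lin_int, ← integral_sub (cint (chi_cont hA)) (cint (lin_cont L))]
  have h1 := int_lower (f := fun s => chi A s - L (kappa s)) (c := m/k) (C := C) hμ (orb_closed J) ((chi_cont hA).sub (lin_cont L)) (by
    intro s hs N
    have := (abs_le.1 (h s hs N)).1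
    simp only [Finset.sum_sub_distrib]
    rw [← lin_birk]
    change _ ≤ GG A s N - _
    linarith)
  have h2 := int_lower (f := fun s => -(chi A s - L (kappa s))) (c := m/k) (C := C) hμ (orb_closed J) ((chi_cont hA).sub (lin_cont L)).neg (by
    intro s hs N
    have := (abs_le.1 (h s hs N)).2
    simp only [Finset.sum_neg_distrib, Finset.sum_sub_distrib]
    rw [← lin_birk]
    change _ ≤ -(GG A s N - _)
    linarith)
  rw [integral_neg] at h2
  rw [abs_le]
  constructor <;> linarith

lemma gen_eq : (inferInstance : MeasurableSpace Seq3) = MeasurableSpace.generateFrom {A | ∃ m, Loc m A} := by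
  apply le_antisymm
  · change MeasurableSpace.pi ≤ _
    rw [MeasurableSpace.pi]
    refine iSup_le fun i => ?_
    rintro _ ⟨S, -, rfl⟩
    refine MeasurableSpace.measurableSet_generateFrom ⟨i+1, fun s t h => ?_⟩
    simp [h i (by omega)]
  · refine MeasurableSpace.generateFrom_le ?_
    rintro A ⟨m, hA⟩
    exact (loc_open hA).measurableSet

lemma uniq {n J} (hJ : ∀ r, pre J (Bk (ns n r) 2)) (hp : Par n) {μ ν} (hμ : Inv (orbitClosure J) μ)
    (hν : Inv (orbitClosure J) ν) (h : ∫ s, kappa s ∂μ = ∫ s, kappa s ∂ν) : μ = ν := by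
  have := hμ.prob
  have := hν.prob
  refine ext_of_generate_finite _ gen_eq ?_ ?_ (by simp)
  · rintro A ⟨m, hA⟩ B ⟨m', hB⟩ -
    refine ⟨m + m', fun s t h => ?_⟩
    rw [Set.mem_inter_iff, Set.mem_inter_iff, hA s t fun i hi => h i (by omega),
      hB s t fun i hi => h i (by omega)]
  · rintro A ⟨m, hA⟩
    rw [← measureReal_eq_measureReal_iff]
    by_contra hne
    have hpos : 0 < |μ.real A - ν.real A| := abs_pos.2 (sub_ne_zero.2 hne)
    obtain ⟨k, hk⟩ := exists_nat_gt (2 * m / |μ.real A - ν.real A|)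
    rw [div_lt_iff₀ hpos] at hk
    have hk0 : 0 < k := by
      rcases Nat.eq_zero_or_pos k with rfl | h
      · have : (0:ℝ) ≤ m := by positivity
        simp at hk; linarith
      · exact h
    obtain ⟨L, hL⟩ := core_int hJ hp hA k hk0
    have h1 := hL μ hμ
    have h2 := hL ν hν
    rw [h] at h1
    have hkr : (0:ℝ) < k := by exact_mod_cast hk0
    have h3 : |μ.real A - ν.real A| ≤ 2 * m / k := by
      rw [abs_le] at *
      have : 2 * (m:ℝ) / k = m/k + m/k := by ring
      constructor <;> linarith
    rw [le_div_iff₀ hkr] at h3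
    linarith

end IMX

open scoped ENNReal

namespace IMX

noncomputable def em (s : Seq3) (N : ℕ) : Measure Seq3 :=
  ((N+1 : ℕ) : ℝ≥0∞)⁻¹ • ∑ i ∈ Finset.range (N+1), Measure.dirac (shift^[i] s)

lemma em_apply (s N) {X : Set Seq3} (h : ∀ i, shift^[i] s ∈ X) : em s N X = 1 := by
  rw [em, Measure.smul_apply, Measure.finsetSum_apply]
  have : ∀ i, Measure.dirac (shift^[i] s) X = 1 := fun i => Measure.dirac_apply_of_mem (h i)
  simp only [this, smul_eq_mul, Finset.sum_const, Finset.card_range, nsmul_eq_mul, mul_one]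
  exact ENNReal.inv_mul_cancel (by simp) (by simp)

instance em_prob (s N) : IsProbabilityMeasure (em s N) := ⟨em_apply s N fun _ => Set.mem_univ _⟩

lemma em_int (s N) {f : Seq3 → ℝ} (hf : Continuous f) :
    ∫ x, f x ∂(em s N) = ((N+1 : ℕ) : ℝ)⁻¹ * ∑ i ∈ Finset.range (N+1), f (shift^[i] s) := by
  rw [em, integral_smul_measure, integral_finsetSum_measure fun i _ => cint hf]
  simp only [integral_dirac, ENNReal.toReal_inv, ENNReal.toReal_natCast, smul_eq_mul]

lemma exists_inv {J s : Seq3} (hs : s ∈ orbitClosure J) {p : V3} (hp : hasFreq s p) :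
    ∃ μ, Inv (orbitClosure J) μ ∧ ∫ x, kappa x ∂μ = p := by
  let U : Ultrafilter ℕ := Ultrafilter.of atTop
  have hU : (U : Filter ℕ) ≤ atTop := Ultrafilter.of_le atTop
  let e : ℕ → ProbabilityMeasure Seq3 := fun N => ⟨em s N, inferInstance⟩
  obtain ⟨μ, hμ⟩ : ∃ μ, Tendsto e U (𝓝 μ) :=
    ⟨_, Ultrafilter.le_nhds_lim (U.map e)⟩
  have key : ∀ f : Seq3 → ℝ, Continuous f →
      Tendsto (fun N => ∫ x, f x ∂(em s N)) U (𝓝 (∫ x, f x ∂(μ : Measure Seq3))) := by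
    intro f hf
    exact ProbabilityMeasure.tendsto_iff_forall_integral_tendsto.1 hμ
      (BoundedContinuousFunction.mkOfCompact ⟨f, hf⟩)
  have hinv : Tendsto (fun N : ℕ => ((N+1 : ℕ) : ℝ)⁻¹) atTop (𝓝 0) :=
    tendsto_inv_atTop_zero.comp (tendsto_natCast_atTop_atTop.comp (tendsto_add_atTop_nat 1))
  refine ⟨μ, ⟨inferInstance, ⟨shift_cont.measurable, ?_⟩, ?_⟩, ?_⟩
  · have : IsProbabilityMeasure ((μ : Measure Seq3).map shift) :=
      Measure.isProbabilityMeasure_map shift_cont.measurable.aemeasurable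
    refine ext_of_forall_integral_eq_of_IsFiniteMeasure fun f => ?_
    rw [integral_map shift_cont.measurable.aemeasurable f.continuous.aestronglyMeasurable]
    have t1 := (key _ (f.continuous.comp shift_cont)).sub (key f f.continuous)
    have t2 : Tendsto (fun N => ∫ x, (f ∘ shift) x ∂(em s N) - ∫ x, f x ∂(em s N)) atTop (𝓝 0) := by
      have : ∀ N : ℕ, ∫ x, (f ∘ shift) x ∂(em s N) - ∫ x, f x ∂(em s N) =
          ((N+1 : ℕ) : ℝ)⁻¹ * (f (shift^[N+1] s) - f s) := by
        intro N
        rw [em_int s N (f.continuous.comp shift_cont), em_int s N f.continuous, ← mul_sub,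
          ← Finset.sum_sub_distrib]
        congr 1
        have := Finset.sum_range_sub (fun i => f (shift^[i] s)) (N+1)
        simp only [Function.comp, ← Function.iterate_succ_apply' (f := shift)]
        exact this
      simp only [this]
      refine squeeze_zero_norm (a := fun N : ℕ => ((N+1 : ℕ) : ℝ)⁻¹ * (2 * ‖f‖)) (fun N => ?_) ?_
      · rw [norm_mul, Real.norm_of_nonneg (by positivity : (0:ℝ) ≤ ((N+1 : ℕ) : ℝ)⁻¹)]
        refine mul_le_mul_of_nonneg_left ?_ (by positivity)
        have h1 := f.norm_coe_le_norm (shift^[N+1] s)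
        have h2 := f.norm_coe_le_norm s
        have h3 := norm_sub_le (f (shift^[N+1] s)) (f s)
        linarith
      · simpa using hinv.mul_const (2 * ‖f‖)
    have := tendsto_nhds_unique t1 (t2.mono_left hU)
    have h3 : ∫ x, (f ∘ shift) x ∂(μ : Measure Seq3) = ∫ x, f (shift x) ∂(μ : Measure Seq3) := rfl
    linarith
  · have h := ProbabilityMeasure.limsup_measure_closed_le_of_tendsto hμ (orb_closed J)
    have h1 : ∀ N, (e N : Measure Seq3) (orbitClosure J) = 1 := fun N =>
      em_apply s N fun i => orb_shift_iter hs i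
    simp only [h1, limsup_const] at h
    exact le_antisymm prob_le_one h
  · have hlin : ∀ L : V3 →ₗ[ℝ] ℝ, L (∫ x, kappa x ∂(μ : Measure Seq3)) = L p := by
      intro L
      rw [← lin_int]
      refine tendsto_nhds_unique (key _ (lin_cont L)) ?_
      have h1 := ((L.continuous_of_finiteDimensional.tendsto p).comp hp).comp (tendsto_add_atTop_nat 1)
      refine (h1.mono_left hU).congr fun N => ?_
      rw [em_int s N (lin_cont L), ← lin_birk]
      simp only [Function.comp, map_smul, smul_eq_mul]
    funext i
    exact hlin (LinearMap.proj i)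

lemma lin_add {μ ν : Measure Seq3} [IsFiniteMeasure μ] [IsFiniteMeasure ν] (L : V3 →ₗ[ℝ] ℝ) (a b : ℝ≥0∞)
    (ha : a ≠ ∞) (hb : b ≠ ∞) : L (∫ x, kappa x ∂(a • μ + b • ν)) =
      a.toReal * L (∫ x, kappa x ∂μ) + b.toReal * L (∫ x, kappa x ∂ν) := by
  have := Measure.smul_finite μ ha
  have := Measure.smul_finite ν hb
  rw [← lin_int, ← lin_int, ← lin_int, integral_add_measure (cint (lin_cont L)) (cint (lin_cont L)),
    integral_smul_measure, integral_smul_measure, smul_eq_mul, smul_eq_mul]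

lemma erg_of {X : Set Seq3} (hX : IsClosed X) {μ} (h : Inv X μ) (L : V3 →ₗ[ℝ] ℝ)
    (hmax : ∀ ν, Inv X ν → L (∫ x, kappa x ∂ν) ≤ L (∫ x, kappa x ∂μ))
    (hu : ∀ ν, Inv X ν → L (∫ x, kappa x ∂μ) ≤ L (∫ x, kappa x ∂ν) → ν = μ) : Ergodic shift μ := by
  have := h.prob
  refine Ergodic.of_mem_extremePoints (mem_extremePoints_iff_left.2 ⟨⟨h.mp, h.prob⟩, ?_⟩)
  rintro x ⟨hx, hx'⟩ y ⟨hy, hy'⟩ ⟨a, b, ha, hb, hab, rfl⟩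
  have ha' : a ≠ ∞ := fun h => by rw [h] at hab; simp at hab
  have hb' : b ≠ ∞ := fun h => by rw [h] at hab; simp at hab
  have h0 : (a • x + b • y) Xᶜ = 0 := (prob_compl_eq_zero_iff hX.measurableSet).2 h.supp
  simp only [Measure.add_apply, Measure.smul_apply, smul_eq_mul, add_eq_zero, mul_eq_zero, ha.ne', hb.ne',
    false_or] at h0
  have ix : Inv X x := ⟨hx', hx, (prob_compl_eq_zero_iff hX.measurableSet).1 h0.1⟩
  have iy : Inv X y := ⟨hy', hy, (prob_compl_eq_zero_iff hX.measurableSet).1 h0.2⟩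
  refine hu x ix ?_
  have e := lin_add (μ := x) (ν := y) L a b ha' hb'
  have m1 := hmax x ix
  have m2 := hmax y iy
  have hab' : a.toReal + b.toReal = 1 := by
    rw [← ENNReal.toReal_add ha' hb', hab, ENNReal.toReal_one]
  have pa := ENNReal.toReal_pos ha.ne' ha'
  have pb := ENNReal.toReal_pos hb.ne' hb'
  set u := L (∫ x, kappa x ∂(a • x + b • y))
  set v := L (∫ s, kappa s ∂x)
  set w := L (∫ s, kappa s ∂y)
  have hbe : b.toReal = 1 - a.toReal := by linarith
  have q := mul_le_mul_of_nonneg_left m2 pb.le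
  have : a.toReal * u ≤ a.toReal * v := by rw [hbe] at e q; linarith
  exact le_of_mul_le_mul_left this pa

lemma final (α : Fin 3 → ℝ) (hα : α ∈ Delta')
    (Iα : Seq3) (hI : IsInfimax α Iα)
    (hexc : ∃ α' ∈ Delta', α' ≠ α ∧ IsInfimax α' Iα) :
    ∃ μ₁ μ₂ : Measure Seq3, μ₁ ≠ μ₂ ∧
      (IsProbabilityMeasure μ₁ ∧ MeasurePreserving shift μ₁ μ₁ ∧ Ergodic shift μ₁ ∧
        μ₁ (orbitClosure Iα) = 1) ∧
      (IsProbabilityMeasure μ₂ ∧ MeasurePreserving shift μ₂ μ₂ ∧ Ergodic shift μ₂ ∧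
        μ₂ (orbitClosure Iα) = 1) ∧
      (∀ μ : Measure Seq3, IsProbabilityMeasure μ → Ergodic shift μ →
        μ (orbitClosure Iα) = 1 → μ = μ₁ ∨ μ = μ₂) ∧
      (∫ x, kappa x ∂μ₁) ≠ (∫ x, kappa x ∂μ₂) ∧
      DFMZ (orbitClosure Iα) = segment ℝ (∫ x, kappa x ∂μ₁) (∫ x, kappa x ∂μ₂) ∧
      segment ℝ (∫ x, kappa x ∂μ₁) (∫ x, kappa x ∂μ₂) =
        {α' | α' ∈ Delta' ∧ IsInfimax α' Iα} ∧
      (∃ s ∈ orbitClosure Iα, ∃ v, hasFreq s v ∧ v ≠ (∫ x, kappa x ∂μ₁)) ∧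
      (∃ s ∈ orbitClosure Iα, ∃ v, hasFreq s v ∧ v ≠ (∫ x, kappa x ∂μ₂)) := by
  obtain ⟨n, hn⟩ := exists_itin hα
  obtain ⟨α', hα', hne, hI'⟩ := hexc
  have hall : ∀ β, β ∈ Delta' → IsInfimax β Iα → β ∈ PP n := by
    intro β hβ hβI
    obtain ⟨n', hn'⟩ := exists_itin hβ
    rwa [itin_unique hn hn' hI hβI]
  have hn' := hall α' hα' hI'
  have hp : Par n := parity hn hn' hne.symm
  have hJ := infimax_pre hn hI
  obtain ⟨i0, p1, h1, p2, h2, hlt, hseg, inj, bd⟩ := PP_seg hp hn hn' hne.symm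
  obtain ⟨hDF, ⟨s1, hs1, hf1⟩, ⟨s2, hs2, hf2⟩⟩ := DF_eq hn hI hp h1 h2 inj bd
  obtain ⟨μ₁, i1, r1⟩ := exists_inv hs1 hf1
  obtain ⟨μ₂, i2, r2⟩ := exists_inv hs2 hf2
  have hp12 : p1 ≠ p2 := fun h => by rw [h] at hlt; exact lt_irrefl _ hlt
  have hX := orb_closed Iα
  let L2 : V3 →ₗ[ℝ] ℝ := LinearMap.proj i0
  let L1 : V3 →ₗ[ℝ] ℝ := - LinearMap.proj i0
  have e1 : Ergodic shift μ₁ := by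
    refine erg_of hX i1 L1 (fun ν hν => ?_) (fun ν hν h => ?_)
    · rw [r1]; exact neg_le_neg (bd _ (rot_mem hJ hp hν)).1
    · rw [r1] at h
      have hr := rot_mem hJ hp hν
      refine uniq hJ hp hν i1 (r1 ▸ inj _ hr _ h1 ?_)
      exact le_antisymm (neg_le_neg_iff.1 h) (bd _ hr).1
  have e2 : Ergodic shift μ₂ := by
    refine erg_of hX i2 L2 (fun ν hν => ?_) (fun ν hν h => ?_)
    · rw [r2]; exact (bd _ (rot_mem hJ hp hν)).2
    · rw [r2] at h
      have hr := rot_mem hJ hp hν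
      refine uniq hJ hp hν i2 (r2 ▸ inj _ hr _ h2 ?_)
      exact le_antisymm (bd _ hr).2 h
  have P1 := i1.prob
  have P2 := i2.prob
  refine ⟨μ₁, μ₂, fun h => hp12 (by rw [← r1, ← r2, h]), ⟨i1.prob, i1.mp, e1, i1.supp⟩,
    ⟨i2.prob, i2.mp, e2, i2.supp⟩, ?_, by rw [r1, r2]; exact hp12, ?_, ?_, ?_, ?_⟩
  · intro μ hμ hE hS
    have iμ : Inv (orbitClosure Iα) μ := ⟨hμ, hE.toMeasurePreserving, hS⟩
    have hr := rot_mem hJ hp iμ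
    rw [hseg] at hr
    obtain ⟨a, b, ha, hb, hab, hr⟩ := hr
    have hab2 : ENNReal.ofReal a + ENNReal.ofReal b = 1 := by
      rw [← ENNReal.ofReal_add ha hb, hab, ENNReal.ofReal_one]
    have iν : Inv (orbitClosure Iα) (ENNReal.ofReal a • μ₁ + ENNReal.ofReal b • μ₂) := by
      refine ⟨⟨?_⟩, ⟨shift_cont.measurable, ?_⟩, ?_⟩
      · simp [hab2]
      · rw [Measure.map_add _ _ shift_cont.measurable, Measure.map_smul, Measure.map_smul,
          i1.mp.map_eq, i2.mp.map_eq]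
      · simp [i1.supp, i2.supp, hab2]
    have hμe : μ = ENNReal.ofReal a • μ₁ + ENNReal.ofReal b • μ₂ := by
      refine uniq hJ hp iμ iν ?_
      rw [← hr]
      funext i
      have := lin_add (μ := μ₁) (ν := μ₂) (LinearMap.proj i) (ENNReal.ofReal a) (ENNReal.ofReal b)
        ENNReal.ofReal_ne_top ENNReal.ofReal_ne_top
      rw [r1, r2, ENNReal.toReal_ofReal ha, ENNReal.toReal_ofReal hb] at this
      exact this.symm
    by_cases ha0 : a = 0
    · right
      have hb1 : b = 1 := by linarith
      rw [hμe, ha0, hb1]; simp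
    · left
      symm
      refine hE.eq_of_absolutelyContinuous i1.mp ?_
      rw [hμe]
      intro S hS
      simp only [Measure.add_apply, Measure.smul_apply, smul_eq_mul, add_eq_zero, mul_eq_zero] at hS
      rcases hS.1 with h | h
      · exact absurd (ENNReal.ofReal_eq_zero.1 h) (not_le.2 (lt_of_le_of_ne ha (Ne.symm ha0)))
      · exact h
  · rw [r1, r2, hDF, hseg]
  · rw [r1, r2, ← hseg]
    refine Set.Subset.antisymm (fun β hβ => infimax_of_PP hn hI hp hβ) ?_
    rintro β ⟨hβ, hβI⟩
    exact hall β hβ hβI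
  · exact ⟨s2, hs2, p2, hf2, by rw [r1]; exact hp12.symm⟩
  · exact ⟨s1, hs1, p1, hf1, by rw [r2]; exact hp12⟩

end IMX

/-- If `α ∈ Δ'` is irrational and exceptional, then `σ` restricted to
`C_α` has exactly two ergodic invariant Borel probability measures `μ₁ ≠ μ₂`, with
distinct rotation vectors; `DF_MZ(C_α)` is the segment joining the two rotation vectors,
which is the exceptional interval `P_α = {α' ∈ Δ' : I(α') = I(α)}`; and `C_α` contains
points whose digit frequency differs from each rotation vector (so `μ₁, μ₂` are lost). -/
theorem stmt18 (α : Fin 3 → ℝ) (hα : α ∈ Delta') (hirr : ¬ IsRat α)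
    (Iα : Seq3) (hI : IsInfimax α Iα)
    (hexc : ∃ α' ∈ Delta', α' ≠ α ∧ IsInfimax α' Iα) :
    ∃ μ₁ μ₂ : Measure Seq3, μ₁ ≠ μ₂ ∧
      (IsProbabilityMeasure μ₁ ∧ MeasurePreserving shift μ₁ μ₁ ∧ Ergodic shift μ₁ ∧
        μ₁ (orbitClosure Iα) = 1) ∧
      (IsProbabilityMeasure μ₂ ∧ MeasurePreserving shift μ₂ μ₂ ∧ Ergodic shift μ₂ ∧
        μ₂ (orbitClosure Iα) = 1) ∧
      (∀ μ : Measure Seq3, IsProbabilityMeasure μ → Ergodic shift μ →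
        μ (orbitClosure Iα) = 1 → μ = μ₁ ∨ μ = μ₂) ∧
      (∫ x, kappa x ∂μ₁) ≠ (∫ x, kappa x ∂μ₂) ∧
      DFMZ (orbitClosure Iα) = segment ℝ (∫ x, kappa x ∂μ₁) (∫ x, kappa x ∂μ₂) ∧
      segment ℝ (∫ x, kappa x ∂μ₁) (∫ x, kappa x ∂μ₂) =
        {α' | α' ∈ Delta' ∧ IsInfimax α' Iα} ∧
      (∃ s ∈ orbitClosure Iα, ∃ v, hasFreq s v ∧ v ≠ (∫ x, kappa x ∂μ₁)) ∧
      (∃ s ∈ orbitClosure Iα, ∃ v, hasFreq s v ∧ v ≠ (∫ x, kappa x ∂μ₂)) := by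
  exact IMX.final α hα Iα hI hexc
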